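/- arXiv:2109.09931 — 3 statements merged into one kernel-verified Lean document; each statement's English description precedes it below -/
import Mathlib

section
/- Let r ≥ 2 and let 𝓕 be a finite nonempty collection of r-uniform cghs, each having at least one edge. Then there is a constant C = C(𝓕) such that sat_○(n, 𝓕) ≤ C·n^{r-1} for all n; that is, the saturation number of any finite family of r-uniform convex geometric hypergraphs is O(n^{r-1}). -/
/-!
Write a set of vertices in increasing order, and call its initial segments prefixes. The proof
builds, greedily and independently of `n`, a family of `r`-sets of naturals whose restriction to
`{0, …, n - 1}` is `ℱ`-free and forces every `ℱ`-free extension of it to have `O(n ^ (r - 1))` edges.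

The finite sets `S` of naturals are examined in an order compatible with their maxima (the order
of `bits`), and `S` is accepted when all `r`-sets with prefix `S` (`cone r S`) can be added to those
contributed by the sets accepted earlier without creating a copy of a member of `ℱ`. The `r`-sets
with an accepted prefix form an `ℱ`-free family (`acc_free`).

When `S` is rejected, some copy of a member of `ℱ` has each edge beginning with `S` or with an
accepted set lying in the interval up to `max S`. Beginning with a given set only restricts the
vertices up to `max S`, so all vertices of the copy beyond `S` may be moved, in order, into any
large enough set `T` to the right of `S` (`exists_copy_in`). Let `H` be `ℱ`-free and contain all
`r`-sets with an accepted prefix, and take for `T` the set of all `t` to the right of `S` such that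
`S ∪ {t}` is accepted or is an edge of `H`. If `T` were large, all edges of the moved copy would
lie in `H`. So a rejected prefix with fewer than `r` elements has at most `M` such continuations
`t`, where `M` bounds the number of vertices of the members of `ℱ` (`card_nextVtx_le`).

The empty prefix is rejected, so each edge `e` of `H` has a longest rejected proper prefix `S`, and
the next vertex `t` of `e` is a continuation of `S`. Given the `(r - 1)`-set `e \ {t}`, there are at
most `2 ^ (r - 1)` choices of `S` in it and then at most `M` choices of `t`, whence
`|H| ≤ n ^ (r - 1) * 2 ^ (r - 1) * M` (`card_bound`). This applies to any saturated family extending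
the greedy one.
-/

open Finset

/-- An abstract convex geometric hypergraph: `m` vertices on a circle, with the
cyclic ordering `0 < 1 < ⋯ < m-1 < 0`, together with a family of edges. -/
structure CGH where
  m : ℕ
  edges : Finset (Finset (Fin m))

/-- A list of points of `Fin n` is in (strict) cyclic order if some rotation of it
is strictly increasing in the linear order of `Fin n`. -/
def CyclicSorted {n : ℕ} (l : List (Fin n)) : Prop :=
  ∃ k : ℕ, (l.rotate k).Chain' (· < ·)

/-- `H` contains a subhypergraph isomorphic to the convex geometric hypergraph `F`:
there is an injection of the vertices of `F` into `Fin n` respecting the cyclic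
orderings and sending every edge of `F` to an edge of `H`. -/
def HasCopy (F : CGH) {n : ℕ} (H : Finset (Finset (Fin n))) : Prop :=
  ∃ f : Fin F.m → Fin n, Function.Injective f ∧ CyclicSorted (List.ofFn f) ∧
    ∀ e ∈ F.edges, e.image f ∈ H

/-- `H` is an `F`-saturated `r`-uniform convex geometric hypergraph on `Fin n`. -/
def IsSat (F : CGH) (r : ℕ) {n : ℕ} (H : Finset (Finset (Fin n))) : Prop :=
  (∀ h ∈ H, h.card = r) ∧ ¬ HasCopy F H ∧
    ∀ e : Finset (Fin n), e.card = r → e ∉ H → HasCopy F (insert e H)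

/-- The saturation number `sat_○(n, F)` for `r`-uniform cgh's on `Fin n`. -/
noncomputable def satNum (F : CGH) (r n : ℕ) : ℕ :=
  sInf {k | ∃ H : Finset (Finset (Fin n)), IsSat F r H ∧ H.card = k}

/-- `M_1^{(r)}`: two geometrically disjoint `r`-tuples. -/
def M1r (r : ℕ) : CGH where
  m := 2 * r
  edges := {Finset.univ.filter (fun i : Fin (2 * r) => (i : ℕ) < r),
            Finset.univ.filter (fun i : Fin (2 * r) => r ≤ (i : ℕ))}

def M1cgh : CGH := ⟨6, {({0, 1, 2} : Finset (Fin 6)), ({3, 4, 5} : Finset (Fin 6))}⟩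
def M2cgh : CGH := ⟨6, {({0, 1, 3} : Finset (Fin 6)), ({2, 4, 5} : Finset (Fin 6))}⟩
def M3cgh : CGH := ⟨6, {({0, 2, 4} : Finset (Fin 6)), ({1, 3, 5} : Finset (Fin 6))}⟩
def S1cgh : CGH := ⟨5, {({0, 1, 4} : Finset (Fin 5)), ({0, 2, 3} : Finset (Fin 5))}⟩
def S2cgh : CGH := ⟨5, {({0, 1, 2} : Finset (Fin 5)), ({0, 3, 4} : Finset (Fin 5))}⟩
def S3cgh : CGH := ⟨5, {({0, 1, 3} : Finset (Fin 5)), ({0, 2, 4} : Finset (Fin 5))}⟩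
def D1cgh : CGH := ⟨4, {({0, 1, 2} : Finset (Fin 4)), ({0, 2, 3} : Finset (Fin 4))}⟩
def D2cgh : CGH := ⟨4, {({0, 1, 2} : Finset (Fin 4)), ({0, 1, 3} : Finset (Fin 4))}⟩

/-- The closed clockwise arc `[a, b]` in `Fin n`. -/
def arcCC {n : ℕ} (a b : Fin n) : Finset (Fin n) :=
  if a ≤ b then Finset.univ.filter (fun x => a ≤ x ∧ x ≤ b)
  else Finset.univ.filter (fun x => a ≤ x ∨ x ≤ b)

/-- The open clockwise arc `(a, b)` in `Fin n`. -/
def arcOO {n : ℕ} (a b : Fin n) : Finset (Fin n) :=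
  if a < b then Finset.univ.filter (fun x => a < x ∧ x < b)
  else Finset.univ.filter (fun x => a < x ∨ x < b)

/-- The tuple `(w_1, …, w_{2ℓ+1})` (`0`-indexed here) consists of distinct points with
`w_1 < w_3 < ⋯ < w_{2ℓ+1} < w_2 < w_4 < ⋯ < w_{2ℓ} < w_1` in the cyclic order. -/
def SemiValid {n : ℕ} (ℓ : ℕ) (w : Fin (2 * ℓ + 1) → Fin n) : Prop :=
  Function.Injective w ∧
    CyclicSorted (List.ofFn fun p : Fin (2 * ℓ + 1) =>
      w ⟨(2 * (p : ℕ)) % (2 * ℓ + 1), Nat.mod_lt _ (by omega)⟩)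

/-- A semi-valid tuple is `r`-valid if moreover `|[w_i, w_{i-1}]| ≥ r` for all `i`. -/
def RValid {n : ℕ} (r ℓ : ℕ) (w : Fin (2 * ℓ + 1) → Fin n) : Prop :=
  SemiValid ℓ w ∧ ∀ i : Fin (2 * ℓ + 1), r ≤ (arcCC (w i) (w (i - 1))).card

/-- `H_n^{(r)}(C)`: all `r`-sets meeting every interval `[w_i, w_{i-1}]`. -/
def HnC {n : ℕ} (r ℓ : ℕ) (w : Fin (2 * ℓ + 1) → Fin n) : Finset (Finset (Fin n)) :=
  (Finset.powersetCard r Finset.univ).filter fun e =>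
    ∀ i : Fin (2 * ℓ + 1), (e ∩ arcCC (w i) (w (i - 1))).Nonempty

/-- `j` is the vertex `λ(v)` for `v` in `H`. -/
def IsLam {n : ℕ} [NeZero n] (H : Finset (Finset (Fin n))) (v j : Fin n) : Prop :=
  (∃ h ∈ H, v ∈ h ∧ h ⊆ arcCC j v) ∧ ¬ ∃ h ∈ H, v ∈ h ∧ h ⊆ arcCC (j + 1) v

/-- `j` is the vertex `ρ(v)` for `v` in `H`. -/
def IsRho {n : ℕ} [NeZero n] (H : Finset (Finset (Fin n))) (v j : Fin n) : Prop :=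
  (∃ h ∈ H, v ∈ h ∧ h ⊆ arcCC v j) ∧ ¬ ∃ h ∈ H, v ∈ h ∧ h ⊆ arcCC v (j - 1)

noncomputable def lamF {n : ℕ} [NeZero n] (H : Finset (Finset (Fin n))) (v : Fin n) : Fin n :=
  letI := Classical.propDecidable (∃ j, IsLam H v j)
  if h : ∃ j, IsLam H v j then h.choose else v

noncomputable def rhoF {n : ℕ} [NeZero n] (H : Finset (Finset (Fin n))) (v : Fin n) : Fin n :=
  letI := Classical.propDecidable (∃ j, IsRho H v j)
  if h : ∃ j, IsRho H v j then h.choose else v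

/-- Strict cyclic betweenness on `Fin n`. -/
def CyclicSbtw {n : ℕ} (a b c : Fin n) : Prop :=
  (a < b ∧ b < c) ∨ (b < c ∧ c < a) ∨ (c < a ∧ a < b)

/-- Isomorphism of two cgh's on `Fin n`: a bijection of the vertex set respecting the
cyclic order and inducing a bijection of the edge sets. -/
def CGHIso {n : ℕ} (H H' : Finset (Finset (Fin n))) : Prop :=
  ∃ g : Fin n ≃ Fin n,
    (∀ a b c : Fin n, CyclicSbtw a b c → CyclicSbtw (g a) (g b) (g c)) ∧
    ∀ e : Finset (Fin n), e ∈ H ↔ e.image g ∈ H'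

/-- The 3-cgh `H_n^{(3)}`: all triples containing `v_0`, together with all triples
containing one of the pairs `{v_1, v_{n-2}}`, `{v_1, v_{n-1}}`, `{v_2, v_{n-1}}`. -/
def Hn3 (n : ℕ) (hn : 6 ≤ n) : Finset (Finset (Fin n)) :=
  (Finset.powersetCard 3 Finset.univ).filter fun e =>
    (⟨0, by omega⟩ : Fin n) ∈ e ∨
    ((⟨1, by omega⟩ : Fin n) ∈ e ∧ (⟨n - 2, by omega⟩ : Fin n) ∈ e) ∨
    ((⟨1, by omega⟩ : Fin n) ∈ e ∧ (⟨n - 1, by omega⟩ : Fin n) ∈ e) ∨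
    ((⟨2, by omega⟩ : Fin n) ∈ e ∧ (⟨n - 1, by omega⟩ : Fin n) ∈ e)

/-- Saturation with respect to a family of cgh's. -/
def FamSat (ℱ : Set CGH) (r : ℕ) {n : ℕ} (H : Finset (Finset (Fin n))) : Prop :=
  (∀ h ∈ H, h.card = r) ∧ (∀ F ∈ ℱ, ¬ HasCopy F H) ∧
    ∀ e : Finset (Fin n), e.card = r → e ∉ H → ∃ F ∈ ℱ, HasCopy F (insert e H)

noncomputable def famSatNum (ℱ : Set CGH) (r n : ℕ) : ℕ :=
  sInf {k | ∃ H : Finset (Finset (Fin n)), FamSat ℱ r H ∧ H.card = k}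

/-- Rotation of a point of `Fin n` by an integer amount `m`. -/
def finShift {n : ℕ} (hn : 0 < n) (v : Fin n) (m : ℤ) : Fin n :=
  ⟨(((v : ℤ) + m) % (n : ℤ)).toNat, by
    have h0 : (0 : ℤ) < (n : ℤ) := by exact_mod_cast hn
    have h1 := Int.emod_nonneg ((v : ℤ) + m) (by omega : (n : ℤ) ≠ 0)
    have h2 := Int.emod_lt_of_pos ((v : ℤ) + m) h0
    omega⟩

/-- The tuple `w` is `(i,k)`-consecutive: starting from position `i`, the entries at
positions `i, i+2, …, i+2(k-1)` are `k` consecutive points `v_j, v_{j+1}, …, v_{j+k-1}`. -/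
def ConsecAt {n ℓ : ℕ} (hn : 0 < n) (w : Fin (2 * ℓ + 1) → Fin n)
    (i : Fin (2 * ℓ + 1)) (k : ℕ) : Prop :=
  ∃ j : Fin n, ∀ s : ℕ, s < k →
    w (i + ⟨(2 * s) % (2 * ℓ + 1), Nat.mod_lt _ (by omega)⟩) = finShift hn j s

/-- The tuple `C_{i,k,m}`: the `k` consecutive points at positions `i, i+2, …, i+2(k-1)`
are rotated by `m` units; all other entries are unchanged. -/
def shiftTuple {n ℓ : ℕ} (hn : 0 < n) (w : Fin (2 * ℓ + 1) → Fin n)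
    (i : Fin (2 * ℓ + 1)) (k : ℕ) (m : ℤ) : Fin (2 * ℓ + 1) → Fin n :=
  fun p => if (p - i).val % 2 = 0 ∧ (p - i).val / 2 < k then finShift hn (w p) m else w p

/-! ### Copies among the naturals, and sets with a given prefix -/

/-- The values of `f` are in strict cyclic order: some rotation of the list of its values
is strictly increasing. -/
def Cyc {m : ℕ} (f : Fin m → ℕ) : Prop :=
  ∃ k : ℕ, ((List.ofFn f).rotate k).Pairwise (· < ·)

/-- The analogue of `HasCopy` for a family of finite sets of natural numbers. -/
def NCopy (F : CGH) (H : Set (Finset ℕ)) : Prop :=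
  ∃ f : Fin F.m → ℕ, Function.Injective f ∧ Cyc f ∧ ∀ e ∈ F.edges, e.image f ∈ H

/-- The `r`-sets having `S` as an initial segment. -/
def cone (r : ℕ) (S : Finset ℕ) : Set (Finset ℕ) :=
  {e | e.card = r ∧ S ⊆ e ∧ ∀ x ∈ e, x ∉ S → ∀ s ∈ S, s < x}

/-- The `r`-sets having some member of `𝒜` as an initial segment. -/
def coneSpan (r : ℕ) (𝒜 : Set (Finset ℕ)) : Set (Finset ℕ) :=
  {e | ∃ S ∈ 𝒜, e ∈ cone r S}

lemma cyclicSorted_iff {m n : ℕ} (f : Fin m → Fin n) :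
    CyclicSorted (List.ofFn f) ↔ Cyc (fun i => (f i : ℕ)) := by
  have h : List.ofFn (fun i => (f i : ℕ)) = (List.ofFn f).map Fin.val := by
    rw [List.map_ofFn]; rfl
  unfold CyclicSorted Cyc
  refine exists_congr fun k => ?_
  rw [h, ← List.map_rotate, List.pairwise_map]
  exact List.isChain_iff_pairwise

lemma Cyc.comp {m : ℕ} {f : Fin m → ℕ} (hf : Cyc f) {g : ℕ → ℕ}
    (hg : StrictMonoOn g (Set.range f)) : Cyc (fun i => g (f i)) := by
  obtain ⟨k, hk⟩ := hf
  refine ⟨k, ?_⟩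
  have h : List.ofFn (fun i => g (f i)) = (List.ofFn f).map g := by
    rw [List.map_ofFn]; rfl
  rw [h, ← List.map_rotate, List.pairwise_map]
  refine List.Pairwise.imp_of_mem ?_ hk
  intro a b ha hb hab
  rw [List.mem_rotate, List.mem_ofFn'] at ha hb
  exact hg ha hb hab

lemma coneSpan_mono (r : ℕ) {𝒜 ℬ : Set (Finset ℕ)} (h : 𝒜 ⊆ ℬ) :
    coneSpan r 𝒜 ⊆ coneSpan r ℬ :=
  fun _ ⟨S, hS, he⟩ => ⟨S, h hS, he⟩

lemma NCopy.mono {F : CGH} {H H' : Set (Finset ℕ)} (h : H ⊆ H') (hF : NCopy F H) :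
    NCopy F H' := by
  obtain ⟨f, h1, h2, h3⟩ := hF
  exact ⟨f, h1, h2, fun e he => h (h3 e he)⟩

/-! ### Greedily accepted prefixes -/

/-- The finite set of naturals whose indicator is the binary expansion of `k`. Listing the finite
sets as `bits 0, bits 1, …` orders them in a way compatible with their maxima. -/
def bits (k : ℕ) : Finset ℕ := Finset.equivBitIndices k

lemma bits_subset_range {k t : ℕ} : bits k ⊆ range t ↔ k < 2 ^ t := by
  have hk : ∑ i ∈ bits k, 2 ^ i = k := Finset.equivBitIndices.symm_apply_apply k
  constructor
  · intro h
    rw [← hk]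
    exact Nat.geomSum_lt le_rfl fun i hi => mem_range.1 (h hi)
  · intro h i hi
    rw [mem_range]
    by_contra hcon
    have h1 : 2 ^ i ≤ ∑ i ∈ bits k, 2 ^ i :=
      Finset.single_le_sum (f := fun i => 2 ^ i) (fun _ _ => Nat.zero_le _) hi
    have h2 : 2 ^ t ≤ 2 ^ i := Nat.pow_le_pow_right (by norm_num) (not_lt.1 hcon)
    omega

open Classical in
/-- The prefixes accepted among `bits 0, …, bits (k - 1)`: a set `S` is accepted when all `r`-sets
that begin with `S` can be added to those that begin with an earlier accepted set without
creating a member of `ℱ`. -/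
noncomputable def accUpTo (ℱ : Set CGH) (r : ℕ) : ℕ → Set (Finset ℕ)
  | 0 => ∅
  | k + 1 =>
    if ∀ F ∈ ℱ, ¬ NCopy F (coneSpan r (insert (bits k) (accUpTo ℱ r k)))
    then insert (bits k) (accUpTo ℱ r k) else accUpTo ℱ r k

/-- All accepted prefixes. -/
def acc (ℱ : Set CGH) (r : ℕ) : Set (Finset ℕ) := {S | ∃ k, S ∈ accUpTo ℱ r k}

lemma accUpTo_mono (ℱ : Set CGH) (r : ℕ) : Monotone (accUpTo ℱ r) := by
  refine monotone_nat_of_le_succ fun k => ?_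
  rw [accUpTo]
  split_ifs
  · exact Set.subset_insert _ _
  · exact le_rfl

lemma accUpTo_subset (ℱ : Set CGH) (r k : ℕ) {S : Finset ℕ} (hS : S ∈ accUpTo ℱ r k) :
    ∃ j < k, S = bits j := by
  induction k with
  | zero => simp [accUpTo] at hS
  | succ k ih =>
    rw [accUpTo] at hS
    split_ifs at hS
    · rcases hS with rfl | hS
      · exact ⟨k, by omega, rfl⟩
      · obtain ⟨j, hj, h⟩ := ih hS; exact ⟨j, by omega, h⟩
    · obtain ⟨j, hj, h⟩ := ih hS; exact ⟨j, by omega, h⟩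

lemma accUpTo_free {ℱ : Set CGH} (r : ℕ) (hE : ∀ F ∈ ℱ, F.edges.Nonempty) (k : ℕ) :
    ∀ F ∈ ℱ, ¬ NCopy F (coneSpan r (accUpTo ℱ r k)) := by
  induction k with
  | zero =>
    rintro F hF ⟨f, -, -, h⟩
    obtain ⟨e, he⟩ := hE F hF
    obtain ⟨S, hS, -⟩ := h e he
    simp [accUpTo] at hS
  | succ k ih =>
    rw [accUpTo]
    split_ifs with h
    · exact h
    · exact ih

lemma acc_free {ℱ : Set CGH} (r : ℕ) (hE : ∀ F ∈ ℱ, F.edges.Nonempty) :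
    ∀ F ∈ ℱ, ¬ NCopy F (coneSpan r (acc ℱ r)) := by
  rintro F hF ⟨f, h1, h2, h3⟩
  -- the finitely many edges of a copy all appear at one stage
  have h4 : ∀ e ∈ F.edges, ∃ k, e.image f ∈ coneSpan r (accUpTo ℱ r k) := by
    intro e he
    obtain ⟨S, ⟨k, hk⟩, hS⟩ := h3 e he
    exact ⟨k, S, hk, hS⟩
  choose! κ hκ using h4
  refine accUpTo_free r hE (F.edges.sup κ) F hF ⟨f, h1, h2, fun e he => ?_⟩
  exact coneSpan_mono r (accUpTo_mono ℱ r (Finset.le_sup he)) (hκ e he)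

/-- The reason for rejecting `S`, using only sets accepted so far, which are confined to the
initial interval spanned by `S`. -/
lemma exists_copy_of_notMem_acc {ℱ : Set CGH} {r : ℕ} {S : Finset ℕ} (hS : S ∉ acc ℱ r) :
    ∃ F ∈ ℱ, ∃ 𝒜 ⊆ acc ℱ r, (∀ S' ∈ 𝒜, ∀ t, S ⊆ range t → S' ⊆ range t) ∧
      NCopy F (coneSpan r (insert S 𝒜)) := by
  obtain ⟨k, rfl⟩ : ∃ k, bits k = S := Finset.equivBitIndices.surjective S
  have hk : ¬ ∀ F ∈ ℱ, ¬ NCopy F (coneSpan r (insert (bits k) (accUpTo ℱ r k))) := by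
    intro h
    refine hS ⟨k + 1, ?_⟩
    rw [accUpTo, if_pos h]
    exact Set.mem_insert _ _
  push Not at hk
  obtain ⟨F, hF, hc⟩ := hk
  refine ⟨F, hF, accUpTo ℱ r k, fun S' h => ⟨k, h⟩, ?_, hc⟩
  intro S' hS' t ht
  obtain ⟨j, hj, rfl⟩ := accUpTo_subset ℱ r k hS'
  rw [bits_subset_range] at ht ⊢
  omega

/-! ### Moving the copy behind a rejection -/

lemma exists_strictMonoOn (U T : Finset ℕ) (h : U.card ≤ T.card) :
    ∃ g : ℕ → ℕ, StrictMonoOn g U ∧ ∀ u ∈ U, g u ∈ T := by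
  obtain ⟨T', hT', hc⟩ := Finset.exists_subset_card_eq h
  let φ := (U.orderIsoOfFin rfl).symm.trans (T'.orderIsoOfFin hc)
  refine ⟨fun x => if hx : x ∈ U then φ ⟨x, hx⟩ else 0, ?_, ?_⟩
  · intro x hx y hy hxy
    have hx' : x ∈ U := hx
    have hy' : y ∈ U := hy
    simp only [hx', hy', dif_pos]
    exact φ.strictMono (show (⟨x, hx'⟩ : U) < ⟨y, hy'⟩ from hxy)
  · intro u hu
    simp only [hu, dif_pos]
    exact hT' (φ ⟨u, hu⟩).2

/-- If `S` is rejected, then the copy of a member of `ℱ` that caused the rejection can be moved so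
that its vertices beyond `S` lie in any prescribed large enough set `T` to the right of `S`:
the families `cone r S'` only ask that the later vertices be later. -/
lemma exists_copy_in {ℱ : Set CGH} {r n : ℕ} {S T : Finset ℕ}
    (hS : S ∉ acc ℱ r) (hT : ∀ F ∈ ℱ, F.m < T.card) (hST : ∀ s ∈ S, ∀ t ∈ T, s < t)
    (hTn : ∀ t ∈ T, t < n) :
    ∃ F ∈ ℱ, ∃ f : Fin F.m → ℕ, Function.Injective f ∧ Cyc f ∧ (∀ i, f i < n) ∧
      ∀ e ∈ F.edges, e.image f ∈ coneSpan r (acc ℱ r) ∨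
        (e.image f ∈ cone r S ∧ e.image f ⊆ S ∪ T) := by
  obtain ⟨F, hF, 𝒜, h𝒜, hb, f, hinj, hcyc, hed⟩ := exists_copy_of_notMem_acc hS
  set b := S.sup Nat.succ with hbdef
  have hSb : S ⊆ range b := fun s hs => mem_range.2 (Finset.le_sup (f := Nat.succ) hs)
  have hbT : ∀ t ∈ T, b ≤ t := fun t ht => Finset.sup_le fun s hs => hST s hs t ht
  have hbn : b ≤ n := by
    obtain ⟨t, ht⟩ : T.Nonempty := Finset.card_pos.1 (by have := hT F hF; omega)
    exact (hbT t ht).trans (hTn t ht).le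
  obtain ⟨g, hg, hgT⟩ := exists_strictMonoOn ((univ.image f).filter (b ≤ ·)) T (by
    refine (Finset.card_filter_le _ _).trans (Finset.card_image_le.trans ?_)
    simpa using (hT F hF).le)
  have hmem : ∀ i, b ≤ f i → f i ∈ (univ.image f).filter (b ≤ ·) := by
    intro i hi; simp [hi]
  -- the vertices in the interval up to `S` stay fixed, the later ones go to `T` in order
  set g' : ℕ → ℕ := fun x => if x < b then x else g x with hg'
  have hlo : ∀ x, x < b → g' x = x := fun x hx => by simp [hg', hx]
  have hhi : ∀ x, b ≤ x → g' x = g x := fun x hx => by simp [hg', not_lt.2 hx]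
  have hhiT : ∀ i, b ≤ f i → g' (f i) ∈ T := fun i hi => by
    rw [hhi _ hi]; exact hgT _ (hmem i hi)
  have hmono : StrictMonoOn g' (Set.range f) := by
    rintro _ ⟨i, rfl⟩ _ ⟨j, rfl⟩ hij
    rcases lt_or_ge (f i) b with hi | hi
    · rcases lt_or_ge (f j) b with hj | hj
      · rwa [hlo _ hi, hlo _ hj]
      · rw [hlo _ hi]; exact lt_of_lt_of_le hi (hbT _ (hhiT j hj))
    · have hj : b ≤ f j := hi.trans hij.le
      rw [hhi _ hi, hhi _ hj]
      exact hg (hmem i hi) (hmem j hj) hij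
  have hcone : ∀ e : Finset (Fin F.m), ∀ S' ⊆ range b, e.image f ∈ cone r S' →
      e.image (fun i => g' (f i)) ∈ cone r S' := by
    rintro e S' hS' ⟨h1, h2, h3⟩
    refine ⟨?_, ?_, ?_⟩
    · rw [← h1, Finset.card_image_of_injective _ hinj, Finset.card_image_of_injective]
      exact fun i j hij => hinj (hmono.injOn ⟨i, rfl⟩ ⟨j, rfl⟩ hij)
    · intro s hs
      obtain ⟨i, hi, rfl⟩ := mem_image.1 (h2 hs)
      exact mem_image.2 ⟨i, hi, hlo _ (mem_range.1 (hS' hs))⟩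
    · intro x hx hxS s hs
      obtain ⟨i, hi, rfl⟩ := mem_image.1 hx
      obtain ⟨j, hj, rfl⟩ := mem_image.1 (h2 hs)
      have hfi : f i ∉ S' := fun h => hxS (by
        simpa [hlo _ (mem_range.1 (hS' h))] using h)
      rw [← hlo _ (mem_range.1 (hS' hs))]
      exact hmono ⟨j, rfl⟩ ⟨i, rfl⟩ (h3 _ (mem_image_of_mem f hi) hfi _ hs)
  refine ⟨F, hF, fun i => g' (f i), fun i j hij => hinj (hmono.injOn ⟨i, rfl⟩ ⟨j, rfl⟩ hij),
    hcyc.comp hmono, ?_, ?_⟩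
  · intro i
    rcases lt_or_ge (f i) b with hi | hi
    · show g' (f i) < n
      rw [hlo _ hi]; omega
    · exact hTn _ (hhiT i hi)
  · intro e he
    obtain ⟨S', hS', hc⟩ := hed e he
    rcases hS' with rfl | hS'
    · refine Or.inr ⟨hcone e _ hSb hc, ?_⟩
      intro x hx
      obtain ⟨i, hi, rfl⟩ := mem_image.1 hx
      rw [mem_union]
      by_cases hfi : f i ∈ S'
      · left; simpa [hlo _ (mem_range.1 (hSb hfi))] using hfi
      · right
        exact hhiT i (Finset.sup_le fun s hs => hc.2.2 _ (mem_image_of_mem f hi) hfi s hs)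
    · exact Or.inl ⟨S', h𝒜 hS', hcone e S' (hb S' hS' b hSb) hc⟩

/-! ### Counting edges -/

/-- The candidates `t` for continuing a prefix `S`: either `S ∪ {t}` is again an accepted prefix,
or it is already an edge of `H`. -/
noncomputable def nextVtx (𝒜 : Set (Finset ℕ)) (H : Finset (Finset ℕ)) (n : ℕ) (S : Finset ℕ) :
    Finset ℕ := by
  classical
  exact (range n).filter fun t => (∀ s ∈ S, s < t) ∧ (insert t S ∈ 𝒜 ∨ insert t S ∈ H)

lemma mem_nextVtx {𝒜 : Set (Finset ℕ)} {H : Finset (Finset ℕ)} {n t : ℕ} {S : Finset ℕ} :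
    t ∈ nextVtx 𝒜 H n S ↔ t < n ∧ (∀ s ∈ S, s < t) ∧ (insert t S ∈ 𝒜 ∨ insert t S ∈ H) := by
  simp [nextVtx]

/-- If `S` is a proper initial segment of `e`, then so is `S` with the least element `t` of `e \ S`
added. -/
lemma exists_next {r : ℕ} {S e : Finset ℕ} (he : e ∈ cone r S) (hne : S.card < r) :
    ∃ t ∈ e, t ∉ S ∧ (∀ s ∈ S, s < t) ∧ e ∈ cone r (insert t S) := by
  obtain ⟨h1, h2, h3⟩ := he
  have hd : (e \ S).Nonempty := by
    rw [Finset.sdiff_nonempty]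
    intro h
    have := Finset.card_le_card h
    omega
  have hm := Finset.min'_mem _ hd
  set t := (e \ S).min' hd with ht
  rw [mem_sdiff] at hm
  refine ⟨t, hm.1, hm.2, h3 t hm.1 hm.2, h1, insert_subset hm.1 h2, ?_⟩
  intro x hx hxS s hs
  rw [mem_insert, not_or] at hxS
  rcases mem_insert.1 hs with rfl | hs
  · exact lt_of_le_of_ne (Finset.min'_le _ _ (mem_sdiff.2 ⟨hx, hxS.2⟩)) (Ne.symm hxS.1)
  · exact h3 x hx hxS.2 s hs

lemma eq_of_mem_cone {r : ℕ} {S e : Finset ℕ} (he : e ∈ cone r S) (hc : S.card = r) : S = e :=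
  Finset.eq_of_subset_of_card_le he.2.1 (by rw [he.1, hc])

/-- A rejected prefix has at most `M` continuations: given more, the copy responsible for the
rejection could be moved so that every vertex beyond `S` is a continuation, and all its edges would
then lie in the `ℱ`-free family `H`. -/
lemma card_nextVtx_le {ℱ : Set CGH} {r n M : ℕ} (hM : ∀ F ∈ ℱ, F.m ≤ M)
    {H : Finset (Finset ℕ)} (hcard : ∀ e ∈ H, e.card = r)
    (hsub : ∀ e ∈ coneSpan r (acc ℱ r), e ⊆ range n → e ∈ H)
    (hfree : ∀ F ∈ ℱ, ∀ f : Fin F.m → ℕ, Function.Injective f → Cyc f → (∀ i, f i < n) →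
      ∃ e ∈ F.edges, e.image f ∉ H)
    {S : Finset ℕ} (hS : S ∉ acc ℱ r) (hSr : S.card < r) :
    (nextVtx (acc ℱ r) H n S).card ≤ M := by
  by_contra hcon
  obtain ⟨F, hF, f, hinj, hcyc, hfn, hed⟩ := exists_copy_in (n := n) hS
    (T := nextVtx (acc ℱ r) H n S) (fun F hF => (hM F hF).trans_lt (not_le.1 hcon))
    (fun s hs t ht => (mem_nextVtx.1 ht).2.1 s hs) (fun t ht => (mem_nextVtx.1 ht).1)
  obtain ⟨e, he, heH⟩ := hfree F hF f hinj hcyc hfn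
  have hrange : e.image f ⊆ range n := by
    intro x hx
    obtain ⟨i, -, rfl⟩ := mem_image.1 hx
    exact mem_range.2 (hfn i)
  refine heH ?_
  rcases hed e he with h | ⟨h, hST⟩
  · exact hsub _ h hrange
  · obtain ⟨t, hte, htS, hlt, hcone⟩ := exists_next h hSr
    have htT : t ∈ nextVtx (acc ℱ r) H n S := by
      have := hST hte
      rw [mem_union] at this
      exact this.resolve_left htS
    rcases (mem_nextVtx.1 htT).2.2 with h' | h'
    · exact hsub _ ⟨_, h', hcone⟩ hrange
    · rwa [← eq_of_mem_cone hcone (hcard _ h')]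

/-- The empty prefix is rejected, since accepting it would accept all `r`-sets. -/
lemma empty_notMem_acc {ℱ : Set CGH} {r : ℕ} (hne : ℱ.Nonempty)
    (hunif : ∀ F ∈ ℱ, (∀ e ∈ F.edges, e.card = r) ∧ F.edges.Nonempty) : ∅ ∉ acc ℱ r := by
  intro h
  obtain ⟨F, hF⟩ := hne
  refine acc_free r (fun F hF => (hunif F hF).2) F hF
    ⟨fun i => i, Fin.val_injective, (cyclicSorted_iff id).1 ⟨0, ?_⟩, fun e he => ⟨∅, h, ?_⟩⟩
  · rw [List.rotate_zero]
    refine List.isChain_iff_pairwise.2 ?_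
    rw [List.pairwise_ofFn]
    exact fun i j h => h
  · refine ⟨?_, by simp, by simp⟩
    rw [Finset.card_image_of_injective _ Fin.val_injective, (hunif F hF).1 e he]

/-- Each edge of `H` is `R ∪ {t}` with `|R| = r - 1`, where `t` continues a rejected prefix
contained in `R`. -/
lemma exists_rejected_prefix {ℱ : Set CGH} {r n : ℕ} (hr : 0 < r) (h0 : ∅ ∉ acc ℱ r)
    {H : Finset (Finset ℕ)} (hcard : ∀ e ∈ H, e.card = r) (hn : ∀ e ∈ H, e ⊆ range n)
    {e : Finset ℕ} (he : e ∈ H) :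
    ∃ S, S ∉ acc ℱ r ∧ S.card < r ∧ ∃ t ∈ nextVtx (acc ℱ r) H n S, t ∈ e ∧ S ⊆ e.erase t := by
  classical
  -- take the longest rejected proper initial segment
  obtain ⟨S, hS, hmax⟩ := Finset.exists_max_image
    (e.powerset.filter fun S => S ∉ acc ℱ r ∧ S.card < r ∧ e ∈ cone r S) Finset.card
    ⟨∅, by simp [h0, hr, cone, hcard e he]⟩
  obtain ⟨-, hSa, hSr, hSe⟩ := mem_filter.1 hS
  obtain ⟨t, hte, htS, hlt, hcone⟩ := exists_next hSe hSr
  refine ⟨S, hSa, hSr, t, mem_nextVtx.2 ⟨mem_range.1 (hn e he hte), hlt, ?_⟩, hte, ?_⟩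
  · by_contra hcon
    rw [not_or] at hcon
    have hc : (insert t S).card < r := by
      refine lt_of_le_of_ne ?_ fun h => hcon.2 (eq_of_mem_cone hcone h ▸ he)
      rw [Finset.card_insert_of_notMem htS]; omega
    have := hmax (insert t S) (mem_filter.2 ⟨mem_powerset.2 hcone.2.1, hcon.1, hc, hcone⟩)
    rw [Finset.card_insert_of_notMem htS] at this
    omega
  · exact Finset.subset_erase.2 ⟨hSe.2.1, htS⟩

/-- The edge `e` is recovered from `R = e \ {t}`, the rejected prefix `S ⊆ R` and the continuation
`t` of `S`: there are at most `n ^ (r - 1)`, `2 ^ (r - 1)` and `M` choices respectively. -/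
lemma card_bound {ℱ : Set CGH} {r n M : ℕ} (hr : 0 < r) (h0 : ∅ ∉ acc ℱ r)
    (hM : ∀ F ∈ ℱ, F.m ≤ M)
    {H : Finset (Finset ℕ)} (hcard : ∀ e ∈ H, e.card = r) (hn : ∀ e ∈ H, e ⊆ range n)
    (hsub : ∀ e ∈ coneSpan r (acc ℱ r), e ⊆ range n → e ∈ H)
    (hfree : ∀ F ∈ ℱ, ∀ f : Fin F.m → ℕ, Function.Injective f → Cyc f → (∀ i, f i < n) →
      ∃ e ∈ F.edges, e.image f ∉ H) :
    H.card ≤ n ^ (r - 1) * (2 ^ (r - 1) * M) := by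
  classical
  have hcover : H ⊆ (powersetCard (r - 1) (range n)).biUnion fun R =>
      (R.powerset.filter fun S => S ∉ acc ℱ r ∧ S.card < r).biUnion fun S =>
        (nextVtx (acc ℱ r) H n S).image fun t => insert t R := by
    intro e he
    obtain ⟨S, hS, hSr, t, ht, hte, hSe⟩ := exists_rejected_prefix hr h0 hcard hn he
    refine mem_biUnion.2 ⟨e.erase t, mem_powersetCard.2
      ⟨(erase_subset _ _).trans (hn e he), by rw [card_erase_of_mem hte, hcard e he]⟩, ?_⟩
    exact mem_biUnion.2 ⟨S, mem_filter.2 ⟨mem_powerset.2 hSe, hS, hSr⟩,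
      mem_image.2 ⟨t, ht, insert_erase hte⟩⟩
  refine (card_le_card hcover).trans ((card_biUnion_le_card_mul _ _ (2 ^ (r - 1) * M) ?_).trans ?_)
  · intro R hR
    refine (card_biUnion_le_card_mul _ _ M ?_).trans (Nat.mul_le_mul_right _ ?_)
    · intro S hS
      obtain ⟨-, hSa, hSr⟩ := mem_filter.1 hS
      exact card_image_le.trans (card_nextVtx_le hM hcard hsub hfree hSa hSr)
    · refine (card_filter_le _ _).trans ?_
      rw [card_powerset, (mem_powersetCard.1 hR).2]
  · rw [card_powersetCard, card_range]
    exact Nat.mul_le_mul_right _ (Nat.choose_le_pow _ _)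

/-! ### Saturated families on `Fin n` -/

/-- A family on `Fin n` viewed as a family of sets of naturals. -/
def natEdges {n : ℕ} (H : Finset (Finset (Fin n))) : Finset (Finset ℕ) :=
  H.image fun e => e.image Fin.val

lemma image_val_mem_natEdges {n : ℕ} {H : Finset (Finset (Fin n))} {e : Finset (Fin n)} :
    e.image Fin.val ∈ natEdges H ↔ e ∈ H :=
  (Finset.image_injective Fin.val_injective).mem_finset_image

lemma exists_notMem_of_not_hasCopy {F : CGH} {n : ℕ} {H : Finset (Finset (Fin n))}
    (h : ¬ HasCopy F H) (f : Fin F.m → ℕ) (hinj : Function.Injective f) (hcyc : Cyc f)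
    (hn : ∀ i, f i < n) : ∃ e ∈ F.edges, e.image f ∉ natEdges H := by
  by_contra! hcon
  refine h ⟨fun i => ⟨f i, hn i⟩, fun i j hij => hinj (Fin.mk.inj_iff.1 hij),
    (cyclicSorted_iff _).2 hcyc, fun e he => ?_⟩
  rw [← image_val_mem_natEdges, Finset.image_image]
  exact hcon e he

lemma HasCopy.nCopy {F : CGH} {n : ℕ} {H : Finset (Finset (Fin n))} (h : HasCopy F H) :
    NCopy F (natEdges H) := by
  obtain ⟨f, h1, h2, h3⟩ := h
  refine ⟨fun i => f i, Fin.val_injective.comp h1, (cyclicSorted_iff f).1 h2, fun e he => ?_⟩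
  have := image_val_mem_natEdges.2 (h3 e he)
  rwa [Finset.image_image] at this

/-- Every `ℱ`-free family extends to an `ℱ`-saturated one. -/
lemma exists_famSat {ℱ : Set CGH} {r n : ℕ} (H₀ : Finset (Finset (Fin n)))
    (hc : ∀ e ∈ H₀, e.card = r) (hf : ∀ F ∈ ℱ, ¬ HasCopy F H₀) :
    ∃ H, H₀ ⊆ H ∧ FamSat ℱ r H := by
  obtain ⟨H, hle, hmax⟩ := Finite.exists_le_maximal
    (p := fun H : Finset (Finset (Fin n)) => (∀ e ∈ H, e.card = r) ∧ ∀ F ∈ ℱ, ¬ HasCopy F H)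
    ⟨hc, hf⟩
  refine ⟨H, hle, hmax.prop.1, hmax.prop.2, fun e he heH => ?_⟩
  by_contra! hcon
  refine heH (hmax.le_of_ge (y := insert e H) ⟨?_, hcon⟩ (subset_insert e H) (mem_insert_self e H))
  intro x hx
  rcases mem_insert.1 hx with rfl | hx
  · exact he
  · exact hmax.prop.1 x hx

theorem famSat_upper (r : ℕ) (hr : 2 ≤ r) (ℱ : Set CGH) (hfin : ℱ.Finite)
    (hne : ℱ.Nonempty)
    (hunif : ∀ F ∈ ℱ, (∀ e ∈ F.edges, e.card = r) ∧ F.edges.Nonempty) :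
    ∃ C : ℝ, 0 < C ∧ ∀ n : ℕ, (famSatNum ℱ r n : ℝ) ≤ C * (n : ℝ) ^ (r - 1) := by
  classical
  obtain ⟨M, hM⟩ := (hfin.image CGH.m).bddAbove
  have hM : ∀ F ∈ ℱ, F.m ≤ M := fun F hF => hM ⟨F, hF, rfl⟩
  refine ⟨2 ^ (r - 1) * M + 1, by positivity, fun n => ?_⟩
  let H₀ : Finset (Finset (Fin n)) := univ.filter fun e => e.image Fin.val ∈ coneSpan r (acc ℱ r)
  have hH₀ : ∀ e, e ∈ H₀ ↔ e.image Fin.val ∈ coneSpan r (acc ℱ r) := fun e => by simp [H₀]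
  obtain ⟨H, hH₀H, hsat⟩ := exists_famSat (ℱ := ℱ) (r := r) H₀
    (fun e he => by
      obtain ⟨S, -, hc, -⟩ := (hH₀ e).1 he
      rwa [Finset.card_image_of_injective _ Fin.val_injective] at hc)
    (fun F hF hcopy => acc_free r (fun F hF => (hunif F hF).2) F hF (hcopy.nCopy.mono (by
      intro x hx
      obtain ⟨e, he, rfl⟩ := mem_image.1 (Finset.mem_coe.1 hx)
      exact (hH₀ e).1 he)))
  have hbound : (natEdges H).card ≤ n ^ (r - 1) * (2 ^ (r - 1) * M) := by
    refine card_bound (by omega) (empty_notMem_acc hne hunif) hM ?_ ?_ ?_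
      (fun F hF => exists_notMem_of_not_hasCopy (hsat.2.1 F hF))
    · intro x hx
      obtain ⟨e, he, rfl⟩ := mem_image.1 hx
      rw [Finset.card_image_of_injective _ Fin.val_injective, hsat.1 e he]
    · intro x hx
      obtain ⟨e, he, rfl⟩ := mem_image.1 hx
      intro y hy
      obtain ⟨i, -, rfl⟩ := mem_image.1 hy
      exact mem_range.2 i.2
    · intro x hx hxn
      obtain ⟨e, rfl⟩ : ∃ e : Finset (Fin n), e.image Fin.val = x := by
        refine ⟨univ.filter fun i => (i : ℕ) ∈ x, ?_⟩
        ext y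
        simp only [mem_image, mem_filter, mem_univ, true_and]
        exact ⟨by rintro ⟨i, hi, rfl⟩; exact hi,
          fun hy => ⟨⟨y, mem_range.1 (hxn hy)⟩, hy, rfl⟩⟩
      exact image_val_mem_natEdges.2 (hH₀H ((hH₀ e).2 hx))
  rw [natEdges, Finset.card_image_of_injective _ (Finset.image_injective Fin.val_injective)] at hbound
  have h1 : famSatNum ℱ r n ≤ n ^ (r - 1) * (2 ^ (r - 1) * M) :=
    (Nat.sInf_le ⟨H, hsat, rfl⟩ : famSatNum ℱ r n ≤ H.card).trans hbound
  have h2 : (famSatNum ℱ r n : ℝ) ≤ (n : ℝ) ^ (r - 1) * (2 ^ (r - 1) * M) := by exact_mod_cast h1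
  have h3 : (0 : ℝ) ≤ (n : ℝ) ^ (r - 1) := by positivity
  linarith
end

section
/- For every n ≥ 6, every M_2-saturated 3-cgh on Ω_n contains all n triples of three cyclically consecutive vertices {v_i, v_{i+1}, v_{i+2}}, and consequently n ≤ sat_○(n, M_2) ≤ 3n − 2. -/
/-!
Two disjoint triples form a copy of `M_2` exactly when the three vertices of one are
distributed as `2, 1, 0` (in some order) among the three gaps of the other. Writing both triples
increasingly, this means one of six linear orders of the six vertices, recorded in `Cross`, up to exchanging the
two triples;
`hasCopy_M2_iff` translates `HasCopy M2cgh` into this form.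

A triple of consecutive vertices leaves all other vertices in one gap, so it is never an edge of
a copy of `M_2` (`not_cross_of_consec`). Adding it to a saturated cgh therefore cannot create a
copy, so it was there already. The `n` consecutive triples are distinct, whence the lower bound.

For the upper bound, an explicit saturated cgh with at most `2 * n + 4 ≤ 3 * n - 2` edges is given.
Take all triples containing `{v_0, v_1}` and all consecutive triples. A non-consecutive triple
avoiding both `v_0` and `v_1` crosses `{v_0, v_1, v_x}` for some `x` in one of its inner gaps, so it
cannot be added. The triples containing exactly one of `v_0`, `v_1` are controlled by a bounded
number of further edges (`satTriples`): these do not cross each other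
(`not_cross_satTriples`) and every triple left out crosses one of them (`exists_cross`).
-/

open Finset

/-! ### Copies of `M_2` in terms of linear orders -/

/-- The triples `{a, b, c}` and `{d, e, f}`, each listed increasingly, form a copy of `M_2` in which
`{a, b, c}` plays the edge `{u_1, u_2, u_4}` and `{d, e, f}` the edge `{u_3, u_5, u_6}`.
The six disjuncts are the six positions of the least vertex in the cyclic pattern
of `M_2`; since the two edges of `M_2` are not interchangeable by a rotation,
this relation is not symmetric in the two triples. -/
def Cross (a b c d e f : ℕ) : Prop :=
  (a < b ∧ b < d ∧ d < c ∧ c < e ∧ e < f) ∨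
  (d < a ∧ a < b ∧ b < e ∧ e < c ∧ c < f) ∨
  (d < e ∧ e < a ∧ a < b ∧ b < f ∧ f < c) ∨
  (a < d ∧ d < e ∧ e < b ∧ b < c ∧ c < f) ∨
  (d < a ∧ a < e ∧ e < f ∧ f < b ∧ b < c) ∨
  (a < d ∧ d < b ∧ b < e ∧ e < f ∧ f < c)

lemma Cross.sorted {a b c d e f : ℕ} (h : Cross a b c d e f) :
    a < b ∧ b < c ∧ d < e ∧ e < f := by
  unfold Cross at h; omega

lemma hasCopy_M2_iff_exists {n : ℕ} {H : Finset (Finset (Fin n))} :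
    HasCopy M2cgh H ↔ ∃ f : Fin 6 → Fin n, Function.Injective f ∧ CyclicSorted (List.ofFn f) ∧
      ({f 0, f 1, f 3} : Finset (Fin n)) ∈ H ∧ ({f 2, f 4, f 5} : Finset (Fin n)) ∈ H := by
  have h : HasCopy M2cgh H ↔ ∃ f : Fin 6 → Fin n, Function.Injective f ∧
      CyclicSorted (List.ofFn f) ∧
      ∀ e ∈ ({({0, 1, 3} : Finset (Fin 6)), ({2, 4, 5} : Finset (Fin 6))} : Finset _),
        e.image f ∈ H := Iff.rfl
  rw [h]
  simp only [Finset.mem_insert, Finset.mem_singleton, forall_eq_or_imp, forall_eq,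
    Finset.image_insert, Finset.image_singleton]

/-- A strictly increasing sextuple, read cyclically from position `s`, gives a copy of `M_2`
as soon as the two edges of the pattern are present. -/
lemma hasCopy_of_strictMono {n : ℕ} {H : Finset (Finset (Fin n))} (x : Fin 6 → Fin n)
    (hx : StrictMono x) (s : Fin 6)
    (h₁ : {x s, x (s + 1), x (s + 3)} ∈ H) (h₂ : {x (s + 2), x (s + 4), x (s + 5)} ∈ H) :
    HasCopy M2cgh H := by
  refine hasCopy_M2_iff_exists.mpr
    ⟨fun i : Fin 6 => x (s + i), ?_, ⟨6 - s.val, ?_⟩, ?_, h₂⟩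
  · intro i j hij
    exact add_left_cancel (hx.injective hij)
  · have h01 : x 0 < x 1 := hx (by decide)
    have h12 : x 1 < x 2 := hx (by decide)
    have h23 : x 2 < x 3 := hx (by decide)
    have h34 : x 3 < x 4 := hx (by decide)
    have h45 : x 4 < x 5 := hx (by decide)
    have key : (List.ofFn (fun i : Fin 6 => x (s + i))).rotate (6 - s.val)
        = [x 0, x 1, x 2, x 3, x 4, x 5] := by
      clear h₁ h₂
      fin_cases s <;> simp [List.ofFn_succ, List.rotate]
    change List.IsChain (· < ·) ((List.ofFn (fun i : Fin 6 => x (s + i))).rotate (6 - s.val))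
    rw [key]
    simp [h01, h12, h23, h34, h45]
  · simpa using h₁

lemma strictMono_vec {n : ℕ} {a b c d e f : Fin n} (h₁ : a < b) (h₂ : b < c) (h₃ : c < d)
    (h₄ : d < e) (h₅ : e < f) : StrictMono ![a, b, c, d, e, f] := by
  rw [Fin.strictMono_iff_lt_succ]
  intro i
  fin_cases i <;> assumption

lemma hasCopy_M2_iff {n : ℕ} {H : Finset (Finset (Fin n))} :
    HasCopy M2cgh H ↔ ∃ a b c d e f : Fin n,
      ({a, b, c} : Finset (Fin n)) ∈ H ∧ ({d, e, f} : Finset (Fin n)) ∈ H ∧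
        Cross a b c d e f := by
  constructor
  · rw [hasCopy_M2_iff_exists]
    rintro ⟨f, -, ⟨k, hk⟩, h₁, h₂⟩
    have hk' : List.IsChain (· < ·) (([f 0, f 1, f 2, f 3, f 4, f 5] : List (Fin n)).rotate k) := hk
    rw [← List.rotate_mod] at hk'
    have hlt : k % ([f 0, f 1, f 2, f 3, f 4, f 5] : List (Fin n)).length < 6 :=
      Nat.mod_lt _ (by simp)
    generalize k % ([f 0, f 1, f 2, f 3, f 4, f 5] : List (Fin n)).length = r at hk' hlt
    -- Each rotation is re-read with both edges listed increasingly.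
    have p1 : ({f 3, f 0, f 1} : Finset (Fin n)) = {f 0, f 1, f 3} := by ext; simp; tauto
    have p2 : ({f 1, f 3, f 0} : Finset (Fin n)) = {f 0, f 1, f 3} := by ext; simp; tauto
    have q1 : ({f 5, f 2, f 4} : Finset (Fin n)) = {f 2, f 4, f 5} := by ext; simp; tauto
    have q2 : ({f 4, f 5, f 2} : Finset (Fin n)) = {f 2, f 4, f 5} := by ext; simp; tauto
    interval_cases r <;> simp [List.rotate] at hk'
    · exact ⟨f 0, f 1, f 3, f 2, f 4, f 5, h₁, h₂, by unfold Cross; omega⟩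
    · exact ⟨f 1, f 3, f 0, f 2, f 4, f 5, p2 ▸ h₁, h₂, by unfold Cross; omega⟩
    · exact ⟨f 3, f 0, f 1, f 2, f 4, f 5, p1 ▸ h₁, h₂, by unfold Cross; omega⟩
    · exact ⟨f 3, f 0, f 1, f 4, f 5, f 2, p1 ▸ h₁, q2 ▸ h₂, by unfold Cross; omega⟩
    · exact ⟨f 0, f 1, f 3, f 4, f 5, f 2, h₁, q2 ▸ h₂, by unfold Cross; omega⟩
    · exact ⟨f 0, f 1, f 3, f 5, f 2, f 4, h₁, q1 ▸ h₂, by unfold Cross; omega⟩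
  · rintro ⟨a, b, c, d, e, f, h₁, h₂, hc⟩
    have p1 : ({c, a, b} : Finset (Fin n)) = {a, b, c} := by ext; simp; tauto
    have p2 : ({b, c, a} : Finset (Fin n)) = {a, b, c} := by ext; simp; tauto
    have q1 : ({f, d, e} : Finset (Fin n)) = {d, e, f} := by ext; simp; tauto
    have q2 : ({e, f, d} : Finset (Fin n)) = {d, e, f} := by ext; simp; tauto
    rcases hc with ⟨i1, i2, i3, i4, i5⟩ | ⟨i1, i2, i3, i4, i5⟩ | ⟨i1, i2, i3, i4, i5⟩ |
      ⟨i1, i2, i3, i4, i5⟩ | ⟨i1, i2, i3, i4, i5⟩ | ⟨i1, i2, i3, i4, i5⟩ <;>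
      have hm := strictMono_vec i1 i2 i3 i4 i5
    · exact hasCopy_of_strictMono _ hm 0 h₁ h₂
    · exact hasCopy_of_strictMono _ hm 1 h₁ (q2 ▸ h₂)
    · exact hasCopy_of_strictMono _ hm 2 h₁ (q1 ▸ h₂)
    · exact hasCopy_of_strictMono _ hm 3 (p2 ▸ h₁) (q1 ▸ h₂)
    · exact hasCopy_of_strictMono _ hm 4 (p2 ▸ h₁) (h₂)
    · exact hasCopy_of_strictMono _ hm 5 (p1 ▸ h₁) h₂

lemma sorted_triple_unique {n : ℕ} {a b c d e f : Fin n} (hab : a < b) (hbc : b < c)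
    (hde : d < e) (hef : e < f) (h : ({a, b, c} : Finset (Fin n)) = {d, e, f}) :
    a = d ∧ b = e ∧ c = f := by
  have ha : a ∈ ({d, e, f} : Finset (Fin n)) := h ▸ by simp
  have hb : b ∈ ({d, e, f} : Finset (Fin n)) := h ▸ by simp
  have hc : c ∈ ({d, e, f} : Finset (Fin n)) := h ▸ by simp
  simp only [Finset.mem_insert, Finset.mem_singleton] at ha hb hc
  omega

lemma exists_sorted_triple {n : ℕ} {s : Finset (Fin n)} (hs : s.card = 3) :
    ∃ a b c : Fin n, a < b ∧ b < c ∧ s = {a, b, c} := by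
  have hmono := (s.orderEmbOfFin hs).strictMono
  refine ⟨s.orderEmbOfFin hs 0, s.orderEmbOfFin hs 1, s.orderEmbOfFin hs 2,
    hmono (by decide), hmono (by decide), ?_⟩
  ext y
  constructor
  · intro hy
    obtain ⟨i, rfl⟩ : y ∈ Set.range (s.orderEmbOfFin hs) := by
      rw [Finset.range_orderEmbOfFin]
      exact hy
    fin_cases i <;> simp
  · simp only [Finset.mem_insert, Finset.mem_singleton]
    rintro (rfl | rfl | rfl) <;> exact Finset.orderEmbOfFin_mem _ _ _

/-! ### Consecutive triples -/

/-- The increasing triple `a < b < c` in `{0, …, n - 1}` consists of three cyclically consecutive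
vertices. -/
def Consec (n a b c : ℕ) : Prop :=
  (b = a + 1 ∧ c = a + 2) ∨ (a = 0 ∧ b = 1 ∧ c = n - 1) ∨ (a = 0 ∧ b = n - 2 ∧ c = n - 1)

lemma not_cross_of_consec {n a b c d e f : ℕ} (hc : c < n) (hf : f < n)
    (h : Consec n a b c ∨ Consec n d e f) : ¬ Cross a b c d e f := by
  unfold Cross
  unfold Consec at h
  omega

lemma exists_consec {n : ℕ} (hn : 6 ≤ n) (i : Fin n) :
    ∃ a b c : Fin n, a < b ∧ b < c ∧
      ({i, i + ⟨1, by omega⟩, i + ⟨2, by omega⟩} : Finset (Fin n)) = {a, b, c} ∧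
      Consec n a b c := by
  have h1 : (i + ⟨1, by omega⟩ : Fin n).val = if i.val + 1 < n then i.val + 1 else 0 := by
    rw [Fin.val_add]
    split_ifs with h
    · exact Nat.mod_eq_of_lt h
    · have : i.val + 1 = n := by omega
      simp [this]
  have h2 : (i + ⟨2, by omega⟩ : Fin n).val = if i.val + 2 < n then i.val + 2 else
      i.val + 2 - n := by
    rw [Fin.val_add]
    split_ifs with h
    · exact Nat.mod_eq_of_lt h
    · rw [Nat.mod_eq_sub_mod (by simpa using h)]
      exact Nat.mod_eq_of_lt (by simp; omega)
  generalize (i + ⟨1, by omega⟩ : Fin n) = j at h1 ⊢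
  generalize (i + ⟨2, by omega⟩ : Fin n) = k at h2 ⊢
  have hi := i.isLt
  unfold Consec
  by_cases c1 : i.val + 2 < n
  · refine ⟨i, j, k, ?_, ?_, rfl, ?_⟩
    · rw [Fin.lt_def]; grind
    · rw [Fin.lt_def]; grind
    · grind
  · by_cases c2 : i.val + 1 < n
    · refine ⟨k, i, j, ?_, ?_, by ext; simp; tauto, ?_⟩
      · rw [Fin.lt_def]; grind
      · rw [Fin.lt_def]; grind
      · grind
    · refine ⟨j, k, i, ?_, ?_, by ext; simp; tauto, ?_⟩
      · rw [Fin.lt_def]; grind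
      · rw [Fin.lt_def]; grind
      · grind

lemma consec_mem_of_isSat {n : ℕ} (hn : 6 ≤ n) {H : Finset (Finset (Fin n))}
    (hH : IsSat M2cgh 3 H) (i : Fin n) :
    ({i, i + ⟨1, by omega⟩, i + ⟨2, by omega⟩} : Finset (Fin n)) ∈ H := by
  obtain ⟨a, b, c, hab, hbc, he, hcon⟩ := exists_consec hn i
  rw [he]
  by_contra hmem
  have hcard : ({a, b, c} : Finset (Fin n)).card = 3 :=
    Finset.card_eq_three.mpr ⟨a, b, c, hab.ne, (hab.trans hbc).ne, hbc.ne, rfl⟩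
  obtain ⟨a', b', c', d, e, f, h₁, h₂, hx⟩ := hasCopy_M2_iff.mp (hH.2.2 _ hcard hmem)
  obtain ⟨s1, s2, s3, s4⟩ := hx.sorted
  rw [Finset.mem_insert] at h₁ h₂
  rcases h₁ with h₁ | h₁
  · obtain ⟨rfl, rfl, rfl⟩ := sorted_triple_unique s1 s2 hab hbc h₁
    exact not_cross_of_consec c'.isLt f.isLt (Or.inl hcon) hx
  · rcases h₂ with h₂ | h₂
    · obtain ⟨rfl, rfl, rfl⟩ := sorted_triple_unique s3 s4 hab hbc h₂
      exact not_cross_of_consec c'.isLt f.isLt (Or.inr hcon) hx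
    · exact hH.2.1 (hasCopy_M2_iff.mpr ⟨a', b', c', d, e, f, h₁, h₂, hx⟩)

lemma le_card_of_isSat {n : ℕ} (hn : 6 ≤ n) {H : Finset (Finset (Fin n))}
    (hH : IsSat M2cgh 3 H) : n ≤ H.card := by
  have hinj : Function.Injective (fun i : Fin n =>
      ({i, i + ⟨1, by omega⟩, i + ⟨2, by omega⟩} : Finset (Fin n))) := by
    have : NeZero n := ⟨by omega⟩
    intro i j hij
    simp only at hij
    have hi : i ∈ ({j, j + ⟨1, by omega⟩, j + ⟨2, by omega⟩} : Finset (Fin n)) :=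
      hij ▸ by simp
    have hj : j ∈ ({i, i + ⟨1, by omega⟩, i + ⟨2, by omega⟩} : Finset (Fin n)) :=
      hij ▸ by simp
    simp only [Finset.mem_insert, Finset.mem_singleton] at hi hj
    -- Otherwise a sum of two numbers from `{1, 2}` would vanish modulo `n ≥ 6`.
    have key : ∀ p q : Fin n, 0 < p.val → p.val ≤ 2 → q.val ≤ 2 → i = j + p → j = i + q →
        False := by
      intro p q hp hp2 hq h h'
      have h0 : p + q = 0 := by
        have : j + (p + q) = j + 0 := by
          rw [add_zero, ← add_assoc, ← h, ← h']
        exact add_left_cancel this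
      have h1 := congrArg Fin.val h0
      rw [Fin.val_add, Nat.mod_eq_of_lt (by omega), Fin.val_zero] at h1
      omega
    rcases hi with hi | hi | hi
    · exact hi
    · rcases hj with hj | hj | hj
      · exact hj.symm
      · exact (key _ _ (by simp) (by simp) (by simp) hi hj).elim
      · exact (key _ _ (by simp) (by simp) (by simp) hi hj).elim
    · rcases hj with hj | hj | hj
      · exact hj.symm
      · exact (key _ _ (by simp) (by simp) (by simp) hi hj).elim
      · exact (key _ _ (by simp) (by simp) (by simp) hi hj).elim
  have := Finset.card_le_card_of_injOn (s := Finset.univ) (t := H) _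
    (fun i _ => consec_mem_of_isSat hn hH i) hinj.injOn
  simpa using this

/-! ### A saturated cgh with few edges -/

/-- The edges of the small saturated cgh, as triples of naturals: those containing `0` and `1`, the
consecutive ones, and a bounded number of others. For `n = 6` the entry `(0, 4, n - 2)` is
degenerate, and `(1, 3, 5)` is used in its place. Entries that are not strictly increasing
(these occur only for `n = 6`) are discarded in `satCGH`. -/
def satTriples (n : ℕ) : Finset (ℕ × ℕ × ℕ) :=
  (Finset.Ico 2 n).image (fun c => (0, 1, c)) ∪
  (Finset.Ico 1 (n - 2)).image (fun a => (a, a + 1, a + 2)) ∪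
  {(0, n - 2, n - 1), (0, 2, 4), (0, 3, n - 2), (if n = 6 then (1, 3, 5) else (0, 4, n - 2)),
    (1, 2, n - 2), (1, 3, 4), (1, 3, n - 2), (1, 4, n - 2), (1, 4, n - 1)}

lemma card_satTriples {n : ℕ} (hn : 6 ≤ n) : (satTriples n).card ≤ 2 * n + 4 := by
  have h1 : ((Finset.Ico 2 n).image (fun c => (0, 1, c))).card ≤ n - 2 :=
    Finset.card_image_le.trans (by simp)
  have h2 : ((Finset.Ico 1 (n - 2)).image (fun a => (a, a + 1, a + 2))).card ≤ n - 3 :=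
    Finset.card_image_le.trans (by simp; omega)
  have h3 : ({(0, n - 2, n - 1), (0, 2, 4), (0, 3, n - 2),
    (if n = 6 then (1, 3, 5) else (0, 4, n - 2)), (1, 2, n - 2), (1, 3, 4), (1, 3, n - 2),
    (1, 4, n - 2), (1, 4, n - 1)} : Finset (ℕ × ℕ × ℕ)).card ≤ 9 := by
    iterate 3 refine (Finset.card_insert_le _ _).trans (Nat.succ_le_succ ?_)
    exact Finset.card_le_six
  unfold satTriples
  refine (Finset.card_union_le _ _).trans ?_
  have := Finset.card_union_le ((Finset.Ico 2 n).image (fun c => (0, 1, c)))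
    ((Finset.Ico 1 (n - 2)).image (fun a => (a, a + 1, a + 2)))
  omega

lemma mem_satTriples {n a b c : ℕ} : (a, b, c) ∈ satTriples n ↔
    (a = 0 ∧ b = 1 ∧ 2 ≤ c ∧ c < n) ∨ (1 ≤ a ∧ a < n - 2 ∧ b = a + 1 ∧ c = a + 2) ∨
    (a = 0 ∧ b = n - 2 ∧ c = n - 1) ∨ (a = 0 ∧ b = 2 ∧ c = 4) ∨ (a = 0 ∧ b = 3 ∧ c = n - 2) ∨
    (n = 6 ∧ a = 1 ∧ b = 3 ∧ c = 5) ∨ (n ≠ 6 ∧ a = 0 ∧ b = 4 ∧ c = n - 2) ∨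
    (a = 1 ∧ b = 2 ∧ c = n - 2) ∨ (a = 1 ∧ b = 3 ∧ c = 4) ∨ (a = 1 ∧ b = 3 ∧ c = n - 2) ∨
    (a = 1 ∧ b = 4 ∧ c = n - 2) ∨ (a = 1 ∧ b = 4 ∧ c = n - 1) := by
  unfold satTriples
  simp only [Finset.mem_union, Finset.mem_image, Finset.mem_Ico, Finset.mem_insert,
    Finset.mem_singleton, Prod.mk.injEq]
  have e1 : (∃ x, (2 ≤ x ∧ x < n) ∧ 0 = a ∧ 1 = b ∧ x = c) ↔
      (a = 0 ∧ b = 1 ∧ 2 ≤ c ∧ c < n) := by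
    constructor
    · rintro ⟨x, h⟩; omega
    · intro h; exact ⟨c, by omega⟩
  have e2 : (∃ x, (1 ≤ x ∧ x < n - 2) ∧ x = a ∧ x + 1 = b ∧ x + 2 = c) ↔
      (1 ≤ a ∧ a < n - 2 ∧ b = a + 1 ∧ c = a + 2) := by
    constructor
    · rintro ⟨x, h⟩; omega
    · intro h; exact ⟨a, by omega⟩
  rw [e1, e2]
  by_cases h : n = 6 <;> simp [h, or_assoc]

lemma not_cross_satTriples {n a b c d e f : ℕ} (hn : 6 ≤ n)
    (h₁ : (a, b, c) ∈ satTriples n) (h₂ : (d, e, f) ∈ satTriples n) : ¬ Cross a b c d e f := by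
  rw [mem_satTriples] at h₁ h₂
  intro h
  unfold Cross at h
  rcases h₁ with h₁ | h₁ | h₁ | h₁ | h₁ | h₁ | h₁ | h₁ | h₁ | h₁ | h₁ | h₁ <;> omega

/-- Every triple outside `satTriples n` forms a copy of `M_2` with a triple in it: triples containing
`0` are blocked by edges containing `1` and vice versa, and the non-consecutive triples
avoiding both by an edge containing `0` and `1`. Triples containing `0` and `1` are all present. -/
lemma exists_cross {n a b c : ℕ} (hn : 6 ≤ n) (hab : a < b) (hbc : b < c) (hc : c < n)
    (h : (a, b, c) ∉ satTriples n) :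
    ∃ d e f, f < n ∧ (d, e, f) ∈ satTriples n ∧ (Cross a b c d e f ∨ Cross d e f a b c) := by
  simp only [mem_satTriples, not_or] at h
  obtain ⟨g1, g2, g3, g4, g5, g6, g7, g8, g9, g10, g11, g12⟩ := h
  have ha : a = 0 ∨ a = 1 ∨ 2 ≤ a := by omega
  rcases ha with rfl | rfl | ha
  · clear g2 g6 g8 g9 g10 g11 g12
    have hb : (b = 2 ∧ c = 3) ∨ (5 ≤ b ∧ c = n - 2) ∨ (b = 2 ∧ 5 ≤ c) ∨
        (3 ≤ b ∧ b ≠ n - 2 ∧ c ≠ n - 2) := by omega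
    clear g1 g3 g4 g5 g7
    rcases hb with hb | hb | hb | hb
    · exact ⟨1, 4, n - 1, by omega, by simp [mem_satTriples],
        Or.inr <| Or.inr <| Or.inr <| Or.inr <| Or.inr <| Or.inl <| by omega⟩
    · exact ⟨1, 4, n - 1, by omega, by simp [mem_satTriples],
        Or.inl <| Or.inr <| Or.inr <| Or.inr <| Or.inl <| by omega⟩
    · exact ⟨1, 3, 4, by omega, by simp [mem_satTriples],
        Or.inl <| Or.inr <| Or.inr <| Or.inr <| Or.inr <| Or.inr <| by omega⟩
    · exact ⟨1, 2, n - 2, by omega, by simp [mem_satTriples], by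
        rcases lt_or_gt_of_ne (show c ≠ n - 2 by omega) with hlt | hlt
        · exact Or.inl <| Or.inr <| Or.inr <| Or.inr <| Or.inl <| by omega
        · exact Or.inr <| Or.inr <| Or.inl <| by omega⟩
  · clear g1 g3 g4 g5 g7
    have hb : (b = 2 ∧ 4 ≤ c ∧ c ≠ n - 2) ∨ (n ≠ 6 ∧ b = 3 ∧ 5 ≤ c ∧ c ≠ n - 2) ∨
        (b = 4 ∧ 5 ≤ c ∧ c < n - 2) ∨ 5 ≤ b := by omega
    clear g2 g6 g8 g9 g10 g11 g12
    rcases hb with hb | hb | hb | hb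
    · exact ⟨0, 3, n - 2, by omega, by simp [mem_satTriples], by
        rcases lt_or_gt_of_ne (show c ≠ n - 2 by omega) with hlt | hlt
        · exact Or.inl <| Or.inr <| Or.inl <| by omega
        · exact Or.inr <| Or.inr <| Or.inr <| Or.inr <| Or.inl <| by omega⟩
    · exact ⟨0, 4, n - 2, by omega, by simp [mem_satTriples, hb.1], by
        rcases lt_or_gt_of_ne (show c ≠ n - 2 by omega) with hlt | hlt
        · exact Or.inl <| Or.inr <| Or.inl <| by omega
        · exact Or.inr <| Or.inr <| Or.inr <| Or.inr <| Or.inl <| by omega⟩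
    · exact ⟨0, 3, n - 2, by omega, by simp [mem_satTriples],
        Or.inr <| Or.inr <| Or.inr <| Or.inr <| Or.inr <| Or.inr <| by omega⟩
    · exact ⟨0, 2, 4, by omega, by simp [mem_satTriples],
        Or.inl <| Or.inr <| Or.inr <| Or.inr <| Or.inr <| Or.inl <| by omega⟩
  · have hb : (b = a + 1 ∧ a + 2 < c) ∨ a + 1 < b := by
      clear g1 g3 g4 g5 g6 g7 g8 g9 g10 g11 g12
      omega
    clear g1 g2 g3 g4 g5 g6 g7 g8 g9 g10 g11 g12
    rcases hb with hb | hb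
    · refine ⟨0, 1, b + 1, by omega, ?_, Or.inl <| Or.inr <| Or.inr <| Or.inl <| by omega⟩
      exact mem_satTriples.mpr (Or.inl ⟨rfl, rfl, by omega, by omega⟩)
    · refine ⟨0, 1, a + 1, by omega, ?_, Or.inr <| Or.inl <| by omega⟩
      exact mem_satTriples.mpr (Or.inl ⟨rfl, rfl, by omega, by omega⟩)

open Classical in
/-- The 3-cgh on `Fin n` whose edges are the strictly increasing triples in `satTriples n`. -/
noncomputable def satCGH (n : ℕ) : Finset (Finset (Fin n)) :=
  Finset.univ.filter fun s => ∃ a b c : Fin n, a < b ∧ b < c ∧ s = {a, b, c} ∧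
    ((a : ℕ), (b : ℕ), (c : ℕ)) ∈ satTriples n

lemma mem_satCGH {n : ℕ} {a b c : Fin n} (hab : a < b) (hbc : b < c) :
    ({a, b, c} : Finset (Fin n)) ∈ satCGH n ↔ ((a : ℕ), (b : ℕ), (c : ℕ)) ∈ satTriples n := by
  simp only [satCGH, Finset.mem_filter, Finset.mem_univ, true_and]
  constructor
  · rintro ⟨d, e, f, hde, hef, h, hT⟩
    obtain ⟨rfl, rfl, rfl⟩ := sorted_triple_unique hab hbc hde hef h
    exact hT
  · intro hT
    exact ⟨a, b, c, hab, hbc, rfl, hT⟩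

lemma card_satCGH {n : ℕ} (hn : 6 ≤ n) : (satCGH n).card ≤ 2 * n + 4 := by
  refine le_trans ?_ (card_satTriples hn)
  have hsub : satCGH n ⊆ (satTriples n).image (fun t : ℕ × ℕ × ℕ =>
      Finset.univ.filter (fun x : Fin n => x.val = t.1 ∨ x.val = t.2.1 ∨ x.val = t.2.2)) := by
    intro s hs
    simp only [satCGH, Finset.mem_filter, Finset.mem_univ, true_and] at hs
    obtain ⟨a, b, c, -, -, rfl, hT⟩ := hs
    refine Finset.mem_image.mpr ⟨_, hT, ?_⟩
    ext x
    simp [Fin.ext_iff]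
  exact (Finset.card_le_card hsub).trans Finset.card_image_le

lemma isSat_satCGH {n : ℕ} (hn : 6 ≤ n) : IsSat M2cgh 3 (satCGH n) := by
  refine ⟨?_, ?_, ?_⟩
  · intro s hs
    simp only [satCGH, Finset.mem_filter, Finset.mem_univ, true_and] at hs
    obtain ⟨a, b, c, hab, hbc, rfl, -⟩ := hs
    exact Finset.card_eq_three.mpr ⟨a, b, c, hab.ne, (hab.trans hbc).ne, hbc.ne, rfl⟩
  · intro hcopy
    obtain ⟨a, b, c, d, e, f, h₁, h₂, hx⟩ := hasCopy_M2_iff.mp hcopy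
    obtain ⟨s1, s2, s3, s4⟩ := hx.sorted
    exact not_cross_satTriples hn ((mem_satCGH s1 s2).mp h₁) ((mem_satCGH s3 s4).mp h₂) hx
  · intro s hs hmem
    obtain ⟨a, b, c, hab, hbc, rfl⟩ := exists_sorted_triple hs
    rw [mem_satCGH hab hbc] at hmem
    obtain ⟨d, e, f, hf, hT, hx⟩ := exists_cross hn hab hbc c.isLt hmem
    have hdef : d < e ∧ e < f := by
      rcases hx with hx | hx
      · exact hx.sorted.2.2
      · exact ⟨hx.sorted.1, hx.sorted.2.1⟩
    have hT' : ({⟨d, by omega⟩, ⟨e, by omega⟩, ⟨f, hf⟩} : Finset (Fin n)) ∈ satCGH n :=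
      (mem_satCGH (Fin.mk_lt_mk.mpr hdef.1) (Fin.mk_lt_mk.mpr hdef.2)).mpr hT
    rw [hasCopy_M2_iff]
    rcases hx with hx | hx
    · exact ⟨a, b, c, _, _, _, Finset.mem_insert_self _ _, Finset.mem_insert_of_mem hT', hx⟩
    · exact ⟨_, _, _, a, b, c, Finset.mem_insert_of_mem hT', Finset.mem_insert_self _ _, hx⟩

theorem sat_M2_bounds (n : ℕ) (hn : 6 ≤ n) :
    (∀ H : Finset (Finset (Fin n)), IsSat M2cgh 3 H →
      ∀ i : Fin n, ({i, i + ⟨1, by omega⟩, i + ⟨2, by omega⟩} : Finset (Fin n)) ∈ H) ∧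
    n ≤ satNum M2cgh 3 n ∧ satNum M2cgh 3 n ≤ 3 * n - 2 := by
  refine ⟨fun H hH i => consec_mem_of_isSat hn hH i, ?_, ?_⟩
  · refine le_csInf ⟨_, satCGH n, isSat_satCGH hn, rfl⟩ ?_
    rintro k ⟨H, hH, rfl⟩
    exact le_card_of_isSat hn hH
  · have h : satNum M2cgh 3 n ≤ (satCGH n).card := Nat.sInf_le ⟨satCGH n, isSat_satCGH hn, rfl⟩
    have := card_satCGH hn
    omega
end

section
/- Let r ≥ 2 and n ≥ 2r. An r-cgh H on Ω_n is M_1^{(r)}-saturated if and only if H = H_n^{(r)}(C) for some r-valid tuple C = (w_1, …, w_{2ℓ+1}) with ℓ ≥ 1. -/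
/-!
Points of the circle are lifted to integers modulo `n`, and arcs to integer intervals `[A, B]`
(`InArc`). A copy of `M_1^{(r)}` in `H` is a pair of edges separated by an arc (`hasCopy_iff`), so
`H` is saturated exactly when it is a maximal family of pairwise non-separated `r`-sets
(`isSat_iff`). A semi-valid tuple lifts to an increasing sequence `u : ℤ → ℤ` with
`u (q + 2ℓ + 1) = u q + n`, and the arcs `[w_i, w_{i-1}]` become the intervals
`[u p, u (p + ℓ)]` (`semiValid_iff_lifts`, `arc_of_lifts`): each contains a bare majority of the
`2ℓ + 1` points of the tuple.

If `H = H(C)`, then of two complementary arcs one contains some `[u p, u (p + ℓ)]`, so no edge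
fits in the other one, and `H` is `M_1`-free. An `r`-set missing `[u p, u (p + ℓ)]` is separated
from any `r`-subset of that arc containing both its ends, and such a subset is an edge
(`isSat_of_rValid`).

Conversely, let `H` be saturated. Of two complementary arcs exactly one contains an edge
(`arc_dichotomy`). Let `ρ a` be the end of the shortest arc starting at `a` that contains an edge.
The dichotomy says `ρ v ≤ x ↔ v + n ≤ ρ (x + 1)`. This self-duality forces the set of jumps of `ρ`
(the starts of the minimal arcs) to equal the image of `ρ` (their ends), so `ρ` permutes the
jumps monotonically, that is, shifts them by a fixed number `ℓ` of places; applying the duality to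
a jump shows that there are `2ℓ + 1` jumps per period (`selfDual_structure`). They form the tuple
`C`, and maximality of `H` gives `H = H(C)`.
-/

open Finset

/-! ### Increasing quasi-periodic integer sequences -/

/-- An increasing sequence of `m` integers spread over less than `n` extends to an increasing
sequence indexed by `ℤ` that advances by `n` every `m` steps. -/
lemma exists_periodic_extension {m : ℕ} (hm : 0 < m) {n : ℤ} (h : ℕ → ℤ)
    (hlt : ∀ i j, i < j → j < m → h i < h j) (hw : h (m - 1) < h 0 + n) :
    ∃ u : ℤ → ℤ, StrictMono u ∧ (∀ q, u (q + m) = u q + n) ∧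
      ∀ i : ℕ, i < m → u i = h i := by
  have hm' : (0 : ℤ) < m := by exact_mod_cast hm
  refine ⟨fun q => h (q % m).toNat + n * (q / m), ?_, ?_, ?_⟩
  · refine strictMono_int_of_lt_succ fun q => ?_
    have h1 := Int.emod_nonneg q hm'.ne'
    have h2 := Int.emod_lt_of_pos q hm'
    have h3 := Int.mul_ediv_add_emod q m
    rcases lt_or_ge (q % m + 1) m with h4 | h4
    · have h5 : (q + 1) / m = q / m ∧ (q + 1) % m = q % m + 1 :=
        (Int.ediv_emod_unique hm').2 ⟨by linarith, by omega, h4⟩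
      simp only [h5.1, h5.2]
      have := hlt (q % m).toNat (q % m + 1).toNat (by omega) (by omega)
      linarith
    · have h5 : (q + 1) / m = q / m + 1 ∧ (q + 1) % m = 0 :=
        (Int.ediv_emod_unique hm').2 ⟨by linarith, le_rfl, hm'⟩
      simp only [h5.1, h5.2]
      have h6 : (q % m).toNat = m - 1 := by omega
      rw [h6]
      simp only [Int.toNat_zero]
      linarith
  · intro q
    simp only [Int.add_emod_right, Int.add_ediv_of_dvd_right (dvd_refl _), Int.ediv_self hm'.ne']
    ring
  · intro i hi
    have : (i : ℤ) < m := by exact_mod_cast hi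
    simp [Int.emod_eq_of_lt (Int.natCast_nonneg i) this,
      Int.ediv_eq_zero_of_lt (Int.natCast_nonneg i) this]

lemma periodic_zsmul {u : ℤ → ℤ} {m n : ℤ} (hp : ∀ q, u (q + m) = u q + n) (q k : ℤ) :
    u (q + k * m) = u q + k * n := by
  induction k using Int.induction_on with
  | zero => simp
  | succ k ih =>
    rw [show q + ((k : ℤ) + 1) * m = (q + k * m) + m by ring, hp, ih]; ring
  | pred k ih =>
    have := hp (q + (-(k : ℤ) - 1) * m)
    rw [show q + (-(k : ℤ) - 1) * m + m = q + (-(k : ℤ)) * m by ring, ih] at this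
    linarith

lemma exists_first_ge {u : ℤ → ℤ} (hu : StrictMono u) {m : ℕ} {n : ℤ} (hn : 0 < n)
    (hp : ∀ q, u (q + m) = u q + n) (a : ℤ) : ∃ p, a ≤ u p ∧ u (p - 1) < a := by
  have hb : ∃ b : ℤ, ∀ z : ℤ, a ≤ u z → b ≤ z := by
    refine ⟨(a - u 0 - |a - u 0|) * m, fun z hz => ?_⟩
    by_contra! hlt
    have h1 := hu hlt
    have h2 := periodic_zsmul hp 0 (a - u 0 - |a - u 0|)
    rw [zero_add] at h2
    have h3 := le_abs_self (a - u 0)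
    have h4 := neg_abs_le (a - u 0)
    nlinarith [mul_nonneg (sub_nonneg.2 h3) (by linarith : 0 ≤ n - 1)]
  have hne : ∃ z, a ≤ u z := by
    refine ⟨0 + |a - u 0| * m, ?_⟩
    rw [periodic_zsmul hp]
    nlinarith [le_abs_self (a - u 0), abs_nonneg (a - u 0)]
  obtain ⟨p, h1, h2⟩ := Int.exists_least_of_bdd hb hne
  refine ⟨p, h1, ?_⟩
  by_contra! h
  have := h2 _ h
  omega

/-- A strictly increasing surjection of `ℤ` onto itself is a translation. -/
lemma translation_of_strictMono {φ : ℤ → ℤ} (hφ : StrictMono φ) (hs : φ.Surjective) (p : ℤ) :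
    φ p = p + φ 0 := by
  have step : ∀ p, φ (p + 1) = φ p + 1 := by
    intro p
    obtain ⟨q, hq⟩ := hs (φ p + 1)
    have h1 : p < q := hφ.lt_iff_lt.1 (by omega)
    have h2 : φ (p + 1) ≤ φ q := hφ.monotone (by omega)
    have h3 : φ p < φ (p + 1) := hφ (by omega)
    omega
  induction p using Int.induction_on with
  | zero => simp
  | succ k ih => rw [step, ih]; ring
  | pred k ih =>
    have := step (-(k : ℤ) - 1)
    rw [sub_add_cancel, ih] at this
    linarith

/-! ### Self-dual maps -/

/-- Here `ρ a` plays the role of the end of the shortest arc starting at `a` in an upward closed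
family of arcs, and `hdual` says that the family contains exactly one of any two complementary
arcs. The minimal arcs of the family are then the `[u p, u (p + ℓ)]`, where `u` enumerates
`2ℓ + 1` points per turn; in the last clause, `[u p, ρ a]` is a minimal arc inside `[a, ρ a]`. -/
lemma selfDual_structure {n : ℕ} (hn : 0 < n) {ρ : ℤ → ℤ} (hper : ∀ v, ρ (v + n) = ρ v + n)
    (hdual : ∀ v x, ρ v ≤ x ↔ v + n ≤ ρ (x + 1)) (hgt : ∀ v, v < ρ v) (hmono : Monotone ρ) :
    ∃ ℓ : ℕ, 1 ≤ ℓ ∧ ∃ u : ℤ → ℤ, StrictMono u ∧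
      (∀ q, u (q + (2 * ℓ + 1 : ℕ)) = u q + n) ∧ (∀ p, ρ (u p) = u (p + ℓ)) ∧
      ∀ a, ∃ p, a ≤ u p ∧ ρ a = u (p + ℓ) := by
  classical
  have hn' : (0 : ℤ) < n := by exact_mod_cast hn
  -- the image of `ρ` consists of jumps of `ρ`
  have himg : ∀ v, ρ (ρ v) < ρ (ρ v + 1) := by
    intro v
    have h1 := (hdual v (ρ v)).1 le_rfl
    have h2 := mt (hdual v (ρ v - 1)).2 (by omega)
    rw [sub_add_cancel] at h2
    omega
  -- every jump `x` is the value of `ρ` at a jump, the largest point where `ρ` equals `x`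
  have hsurj : ∀ x, ρ x < ρ (x + 1) → ∃ v, ρ v < ρ (v + 1) ∧ ρ v = x ∧
      ∀ a, ρ a = x → a ≤ v := by
    intro x hx
    have h1 := (hdual (ρ (x + 1) - n) x).2 (by omega)
    have h2 := mt (hdual (ρ (x + 1) - n) (x - 1)).1 (by rw [sub_add_cancel x 1]; omega)
    have h3 := mt (hdual (ρ (x + 1) - n + 1) x).1 (by omega)
    refine ⟨ρ (x + 1) - n, by omega, by omega, fun a ha => ?_⟩
    have := (hdual a x).1 ha.le
    omega
  have hjper : ∀ v k : ℤ, ρ (v + k * n) = ρ v + k * n := periodic_zsmul hper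
  -- enumerate the jumps in one period, and extend periodically
  set J : Finset ℤ := (Finset.Ico 0 (n : ℤ)).filter fun v => ρ v < ρ (v + 1) with hJ
  have hjmod : ∀ v, ρ v < ρ (v + 1) → v % n ∈ J := by
    intro v hv
    have h0 := Int.mul_ediv_add_emod v n
    have h1 := hjper v (-(v / n))
    have h2 := hjper (v + 1) (-(v / n))
    rw [show v + -(v / n) * n = v % n by linarith] at h1
    rw [show v + 1 + -(v / n) * n = v % n + 1 by linarith] at h2
    simp only [hJ, Finset.mem_filter, Finset.mem_Ico]
    exact ⟨⟨Int.emod_nonneg _ hn'.ne', Int.emod_lt_of_pos _ hn'⟩, by omega⟩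
  have hJpos : 0 < J.card := Finset.card_pos.2 ⟨_, hjmod _ (himg 0)⟩
  set N := J.card with hN
  set o := J.orderEmbOfFin rfl with ho
  have hoJ : ∀ i, o i ∈ J := fun i => J.orderEmbOfFin_mem rfl i
  have hoB : ∀ i, 0 ≤ o i ∧ o i < n := fun i => by
    have := hoJ i
    simp only [hJ, Finset.mem_filter, Finset.mem_Ico] at this
    exact this.1
  obtain ⟨u, hu, hup, huv⟩ := exists_periodic_extension (m := N) hJpos (n := n)
    (fun i => if h : i < N then o ⟨i, h⟩ else 0)
    (by
      intro i j hij hj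
      simp only [hj, hij.trans hj, dif_pos]
      exact o.strictMono hij)
    (by
      have hlt : N - 1 < N := by omega
      simp only [hlt, hJpos, dif_pos]
      have := hoB ⟨N - 1, hlt⟩
      have := hoB ⟨0, hJpos⟩
      omega)
  have hupz := periodic_zsmul hup
  have hN' : (0 : ℤ) < N := by exact_mod_cast hJpos
  have huJ : ∀ p, ρ (u p) < ρ (u p + 1) := by
    intro p
    have h1 := hupz (p % N) (p / N)
    have h0 := Int.mul_ediv_add_emod p N
    rw [show p % N + p / N * N = p by linarith] at h1
    have h2 := Int.emod_nonneg p hN'.ne'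
    have h3 := Int.emod_lt_of_pos p hN'
    have h4 := huv (p % N).toNat (by omega)
    rw [Int.toNat_of_nonneg h2, dif_pos (by omega)] at h4
    have h5 := hoJ ⟨(p % N).toNat, by omega⟩
    rw [← h4] at h5
    simp only [hJ, Finset.mem_filter] at h5
    rw [h1, hjper, add_right_comm, hjper]
    linarith [h5.2]
  have hJu : ∀ v, ρ v < ρ (v + 1) → ∃ p, u p = v := by
    intro v hv
    have h1 := hjmod v hv
    have : v % n ∈ Set.range o := by
      rw [ho, Finset.range_orderEmbOfFin]; exact h1
    obtain ⟨i, hi⟩ := this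
    refine ⟨i + v / n * N, ?_⟩
    rw [hupz, huv i i.2, dif_pos i.2, hi]
    linarith [Int.mul_ediv_add_emod v n]
  -- on jumps, `ρ` acts as a translation of the index
  choose φ hφ using fun p => hJu _ (himg (u p))
  have hφm : StrictMono φ := by
    intro p q hpq
    rw [← hu.lt_iff_lt, hφ, hφ]
    exact (huJ p).trans_le (hmono (hu hpq))
  have hφs : φ.Surjective := by
    intro q
    obtain ⟨v, hv, hvx, -⟩ := hsurj _ (huJ q)
    obtain ⟨p, rfl⟩ := hJu v hv
    exact ⟨p, hu.injective (by rw [hφ, hvx])⟩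
  have hφt := translation_of_strictMono hφm hφs
  have hpos : 0 < φ 0 := by
    rw [← hu.lt_iff_lt, hφ]; exact hgt _
  obtain ⟨ℓ, hℓ⟩ : ∃ ℓ : ℕ, φ 0 = ℓ := ⟨(φ 0).toNat, by omega⟩
  have hρu : ∀ p, ρ (u p) = u (p + ℓ) := fun p => by rw [← hφ, hφt, hℓ]
  have hlast : ∀ a, ∃ p, a ≤ u p ∧ ρ a = u (p + ℓ) := by
    intro a
    obtain ⟨v, hv, hvx, hmax⟩ := hsurj _ (himg a)
    obtain ⟨p, rfl⟩ := hJu v hv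
    exact ⟨p, hmax a rfl, by rw [← hvx, hρu]⟩
  have hsucc : ∀ p, ρ (u p + 1) = u (p + 1 + ℓ) := by
    intro p
    obtain ⟨q, h1, h2⟩ := hlast (u p + 1)
    have h3 : p < q := hu.lt_iff_lt.1 (by omega)
    have h4 : ρ (u p + 1) ≤ ρ (u (p + 1)) := hmono (hu (by omega))
    rw [h2, hρu] at h4
    have h5 := hu.le_iff_le.1 h4
    rw [h2, show q = p + 1 by omega]
  -- self-duality pins the number of jumps per period to `2ℓ + 1`
  have hNℓ : N = 2 * ℓ + 1 := by
    have h1 := (hdual (u 0) (ρ (u 0))).1 le_rfl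
    rw [← hup, hρu, hsucc, hu.le_iff_le] at h1
    have h2 := mt (hdual (u 0) (ρ (u 0) - 1)).2 (by omega)
    rw [sub_add_cancel, ← hup, hρu, hρu, hu.le_iff_le] at h2
    omega
  exact ⟨ℓ, by omega, u, hu, hNℓ ▸ hup, hρu, hlast⟩

/-! ### Arcs of the circle and lifts of cyclic sequences -/

/-- `v` lies on the closed clockwise arc from the residue of `A` to the residue of `B`: some
integer representing `v` modulo `n` lies in `[A, B]`. The arc is empty if `B < A`, and it is the
whole circle if `B ≥ A + n - 1`. -/
def InArc {n : ℕ} (A B : ℤ) (v : Fin n) : Prop := ∃ k : ℤ, A ≤ v + k * n ∧ v + k * n ≤ B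

lemma exists_rep {n : ℕ} (a : ℤ) (v : Fin n) : ∃ k : ℤ, a ≤ v + k * n ∧ v + k * n < a + n := by
  have hn : (0 : ℤ) < n := by have := v.2; omega
  have h1 := Int.mul_ediv_add_emod (v - a) n
  have h2 := Int.emod_nonneg (v - a) hn.ne'
  have h3 := Int.emod_lt_of_pos (v - a) hn
  exact ⟨-((v - a) / n), by linarith, by linarith⟩

lemma exists_residue {n : ℕ} (hn : 0 < n) (z : ℤ) : ∃ v : Fin n, ∃ k : ℤ, v + k * n = z := by
  have hn' : (0 : ℤ) < n := by exact_mod_cast hn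
  have h2 := Int.emod_nonneg z hn'.ne'
  have h3 := Int.emod_lt_of_pos z hn'
  refine ⟨⟨(z % n).toNat, by omega⟩, z / n, ?_⟩
  simp only [Int.toNat_of_nonneg h2]
  linarith [Int.mul_ediv_add_emod z n]

lemma eq_of_add_mul {N a b k : ℤ} (ha : 0 ≤ a) (ha' : a < N) (hb : 0 ≤ b) (hb' : b < N)
    (h : a = b + k * N) : k = 0 := by
  have h1 : k < 1 := by by_contra! h; nlinarith
  have h2 : -1 < k := by by_contra! h; nlinarith
  omega

lemma residue_unique {n : ℕ} {v v' : Fin n} {k k' : ℤ} (h : (v : ℤ) + k * n = v' + k' * n) :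
    v = v' := by
  have h1 := v.2
  have h2 := v'.2
  have h0 : k' - k = 0 := eq_of_add_mul (N := n) (a := v) (b := v') (by omega) (by omega)
    (by omega) (by omega) (by linarith)
  have : k' = k := by omega
  subst this
  ext; omega

lemma InArc.mono {n : ℕ} {A B A' B' : ℤ} {v : Fin n} (h : InArc A B v) (hA : A' ≤ A)
    (hB : B ≤ B') : InArc A' B' v := by
  obtain ⟨k, h1, h2⟩ := h
  exact ⟨k, by omega, by omega⟩

lemma inArc_shift {n : ℕ} {A B : ℤ} (j : ℤ) {v : Fin n} :
    InArc (A + j * n) (B + j * n) v ↔ InArc A B v := by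
  constructor
  · rintro ⟨k, h1, h2⟩
    exact ⟨k - j, by linarith, by linarith⟩
  · rintro ⟨k, h1, h2⟩
    exact ⟨k + j, by linarith, by linarith⟩

/-- `[a, x]` and `[x + 1, a + n - 1]` are complementary arcs. -/
lemma not_inArc {n : ℕ} {a x : ℤ} {v : Fin n} : ¬ InArc a x v ↔ InArc (x + 1) (a + n - 1) v := by
  constructor
  · intro h
    obtain ⟨k, h1, h2⟩ := exists_rep a v
    refine ⟨k, ?_, by omega⟩
    by_contra! h3
    exact h ⟨k, h1, by omega⟩
  · rintro ⟨k, h1, h2⟩ ⟨j, h3, h4⟩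
    have hn : (0 : ℤ) < n := by have := v.2; omega
    have h5 : (0 : ℤ) < k - j := by by_contra! h; nlinarith
    have h6 : k - j < (1 : ℤ) := by by_contra! h; nlinarith
    omega

/-- When `B ≡ A` modulo `n` the bound `B < A + n` forces `B = A`, and both sides describe the
single point `a`; the arc `arcCC a b` is never read as a full turn. -/
lemma arcCC_mem_iff {n : ℕ} {a b v : Fin n} {A B k k' : ℤ} (hA : a + k * n = A)
    (hB : b + k' * n = B) (hAB : A ≤ B) (hBA : B < A + n) :
    v ∈ arcCC a b ↔ InArc A B v := by
  have ha := a.2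
  have hb := b.2
  have hv := v.2
  have hn : (0 : ℤ) < n := by omega
  have e1 : -1 < k' - k := by by_contra! h; nlinarith
  have e2 : k' - k < 2 := by by_contra! h; nlinarith
  have key : InArc A B v ↔ InArc (a : ℤ) (b + (k' - k) * n) v := by
    rw [← inArc_shift (A := (a : ℤ)) k, hA, add_assoc, ← add_mul, sub_add_cancel, hB]
  rw [key, arcCC]
  -- either `a ≤ b`, or the arc passes from `n - 1` to `0`
  obtain h | h : k' - k = 0 ∨ k' - k = 1 := by omega
  · have hk : k' = k := by omega
    subst hk
    have hab : a ≤ b := by rw [Fin.le_def]; omega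
    simp only [hab, if_true, Finset.mem_filter, Finset.mem_univ, true_and, Fin.le_def, sub_self]
    constructor
    · rintro ⟨h1, h2⟩
      exact ⟨0, by omega, by omega⟩
    · rintro ⟨j, h1, h2⟩
      have h3 : -1 < j := by by_contra! h; nlinarith
      have h4 : j < 1 := by by_contra! h; nlinarith
      obtain rfl : j = 0 := by omega
      omega
  · have hk : k' = k + 1 := by omega
    subst hk
    have hab : ¬ a ≤ b := by
      rw [Fin.le_def]
      have : ((k : ℤ) + 1) * n = k * n + n := by ring
      omega
    simp only [hab, if_false, Finset.mem_filter, Finset.mem_univ, true_and, Fin.le_def]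
    rw [Fin.le_def] at hab
    constructor
    · rintro (h1 | h1)
      · exact ⟨0, by omega, by omega⟩
      · exact ⟨1, by omega, by omega⟩
    · rintro ⟨j, h1, h2⟩
      have h3 : -1 < j := by by_contra! h; nlinarith
      have h4 : j < 2 := by by_contra! h; nlinarith
      obtain rfl | rfl : j = 0 ∨ j = 1 := by omega
      · left; omega
      · right; omega

/-- `u` is a lift of the cyclic sequence `g` of points of the circle `ℤ / n` to an increasing
sequence of integers: going once through `g` means going once around the circle. -/
def Lifts {n m : ℕ} (u : ℤ → ℤ) (g : Fin m → Fin n) : Prop :=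
  StrictMono u ∧ (∀ q, u (q + m) = u q + n) ∧ ∀ i : Fin m, ∃ k : ℤ, g i + k * n = u i

lemma Lifts.rep {n m : ℕ} {u : ℤ → ℤ} {g : Fin m → Fin n} (h : Lifts u g) (i : Fin m)
    {q c : ℤ} (hq : q = i + c * m) : ∃ k : ℤ, g i + k * n = u q := by
  obtain ⟨k, hk⟩ := h.2.2 i
  refine ⟨k + c, ?_⟩
  rw [hq, periodic_zsmul h.2.1]
  linarith

lemma Lifts.injective {n m : ℕ} {u : ℤ → ℤ} {g : Fin m → Fin n} (h : Lifts u g) :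
    Function.Injective g := by
  intro i j hij
  obtain ⟨k, hk⟩ := h.2.2 i
  obtain ⟨k', hk'⟩ := h.2.2 j
  have h1 : u i = u (j + (k - k') * m) := by
    rw [periodic_zsmul h.2.1, ← hk, ← hk', hij]; ring
  have h2 := h.1.injective h1
  have h3 := i.2
  have h4 := j.2
  have h5 := eq_of_add_mul (N := m) (by omega) (by omega) (by omega) (by omega) h2
  rw [h5] at h2
  ext; omega

lemma cyclicSorted_ofFn {n m : ℕ} (hm : 0 < m) (g : Fin m → Fin n) :
    CyclicSorted (List.ofFn g) ↔ ∃ k : ℕ, ∀ i j, i < j → j < m →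
      g ⟨(i + k) % m, Nat.mod_lt _ hm⟩ < g ⟨(j + k) % m, Nat.mod_lt _ hm⟩ := by
  unfold CyclicSorted
  refine exists_congr fun k => ?_
  change List.IsChain _ _ ↔ _
  rw [List.isChain_iff_pairwise, List.pairwise_iff_getElem]
  simp only [List.length_rotate, List.length_ofFn, List.getElem_rotate, List.getElem_ofFn]
  constructor
  · intro h i j hij hj
    exact h i j (hij.trans hj) hj hij
  · intro h i j hi hj hij
    exact h i j hij hj

/-- A sequence is in strict cyclic order exactly when it lifts to an increasing sequence of
integers that makes one turn; this removes the choice of the rotation. -/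
lemma cyclicSorted_iff_lifts {n m : ℕ} (hm : 0 < m) (g : Fin m → Fin n) :
    CyclicSorted (List.ofFn g) ↔ ∃ u, Lifts u g := by
  have hm' : (0 : ℤ) < m := by exact_mod_cast hm
  have hn : 0 < n := (Nat.zero_le _).trans_lt (g ⟨0, hm⟩).2
  rw [cyclicSorted_ofFn hm]
  constructor
  · rintro ⟨k, hk⟩
    obtain ⟨u, h1, h2, h3⟩ := exists_periodic_extension hm (n := n)
      (fun i => (g ⟨(i + k) % m, Nat.mod_lt _ hm⟩ : ℤ))
      (fun i j hij hj => by have := hk i j hij hj; rw [Fin.lt_def] at this; exact_mod_cast this)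
      (by
        have := (g ⟨(m - 1 + k) % m, Nat.mod_lt _ hm⟩).2
        omega)
    refine ⟨fun q => u (q - k), fun a b hab => h1 (by omega), fun q => ?_, fun i => ?_⟩
    · rw [← h2, sub_add_eq_add_sub]
    · have e0 := Int.mul_ediv_add_emod ((i : ℤ) - k) m
      have e1 := Int.emod_nonneg ((i : ℤ) - k) hm'.ne'
      have e2 := Int.emod_lt_of_pos ((i : ℤ) - k) hm'
      obtain ⟨j, hj⟩ : ∃ j : ℕ, ((i : ℤ) - k) % m = j := ⟨_, (Int.toNat_of_nonneg e1).symm⟩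
      have e3 : ((i : ℤ) - k) = j + ((i : ℤ) - k) / m * m := by rw [← hj]; linarith
      refine ⟨((i : ℤ) - k) / m, ?_⟩
      dsimp only
      rw [e3, periodic_zsmul h2, h3 j (by omega), ← e3]
      congr 4
      ext
      have e4 : ((j + k : ℕ) : ℤ) % m = (i : ℤ) := by
        rw [Nat.cast_add, ← hj, Int.emod_add_emod, sub_add_cancel]
        exact Int.emod_eq_of_lt (by omega) (by have := i.2; omega)
      dsimp only
      exact_mod_cast e4.symm
  · rintro ⟨u, hu⟩
    -- the window of `m` terms of `u` starting at the first nonnegative one lies in `[0, n)`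
    obtain ⟨q, hq1, hq2⟩ := exists_first_ge hu.1 (n := n) (by omega) hu.2.1 0
    have f1 := Int.emod_nonneg q hm'.ne'
    have f0 := Int.mul_ediv_add_emod q m
    have hval : ∀ i < m, (g ⟨(i + (q % m).toNat) % m, Nat.mod_lt _ hm⟩ : ℤ) = u (q + i) := by
      intro i hi
      obtain ⟨k, hk⟩ := hu.rep ⟨(i + (q % m).toNat) % m, Nat.mod_lt _ hm⟩ (q := q + i)
        (c := q / m + ((i + (q % m).toNat) / m : ℕ)) (by
          have := Nat.div_add_mod (i + (q % m).toNat) m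
          have h : (((i + (q % m).toNat : ℕ)) : ℤ) = i + q % m := by
            rw [Nat.cast_add, Int.toNat_of_nonneg f1]
          have this : ((m * ((i + (q % m).toNat) / m) + (i + (q % m).toNat) % m : ℕ) : ℤ)
            = i + q % m := by rw [this, h]
          rw [Nat.cast_add, Nat.cast_mul] at this
          linarith)
      have g1 : 0 ≤ u (q + i) := hq1.trans (hu.1.monotone (by omega))
      have g2 : u (q + i) ≤ u (q - 1 + m) := hu.1.monotone (by omega)
      rw [hu.2.1] at g2
      have g3 := (g ⟨(i + (q % m).toNat) % m, Nat.mod_lt _ hm⟩).2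
      have := eq_of_add_mul (N := n) g1 (by omega) (by omega) (by omega) hk.symm
      rw [this] at hk
      linarith
    refine ⟨(q % m).toNat, fun i j hij hj => ?_⟩
    rw [Fin.lt_def]
    zify
    rw [hval i (by omega), hval j hj]
    exact hu.1 (by omega)

/-! ### Copies of `M_1^{(r)}` and separated sets -/

/-- Some arc contains `e` and misses `f`; for disjoint `r`-sets this says that they form a copy
of `M_1^{(r)}`. -/
def Separated {n : ℕ} (e f : Finset (Fin n)) : Prop :=
  ∃ a x : ℤ, (∀ v ∈ e, InArc a x v) ∧ ∀ v ∈ f, ¬ InArc a x v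

lemma Separated.symm {n : ℕ} {e f : Finset (Fin n)} (h : Separated e f) : Separated f e := by
  obtain ⟨a, x, h1, h2⟩ := h
  exact ⟨x + 1, a + n - 1, fun v hv => not_inArc.1 (h2 v hv),
    fun v hv h3 => not_inArc.2 h3 (h1 v hv)⟩

lemma not_separated_self {n : ℕ} {e : Finset (Fin n)} (he : e.Nonempty) : ¬ Separated e e := by
  rintro ⟨a, x, h1, h2⟩
  obtain ⟨v, hv⟩ := he
  exact h2 v hv (h1 v hv)

lemma hasCopy_M1r {n r : ℕ} (G : Finset (Finset (Fin n))) :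
    HasCopy (M1r r) G ↔ ∃ g : Fin (2 * r) → Fin n, Function.Injective g ∧
      CyclicSorted (List.ofFn g) ∧ (univ.filter fun i : Fin (2 * r) => (i : ℕ) < r).image g ∈ G ∧
      (univ.filter fun i : Fin (2 * r) => r ≤ (i : ℕ)).image g ∈ G := by
  constructor
  · rintro ⟨g, h1, h2, h3⟩
    exact ⟨g, h1, h2, h3 _ (Finset.mem_insert_self _ _),
      h3 _ (Finset.mem_insert_of_mem (Finset.mem_singleton_self _))⟩
  · rintro ⟨g, h1, h2, h3, h4⟩
    refine ⟨g, h1, h2, fun d hd => ?_⟩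
    rcases Finset.mem_insert.1 hd with h | h
    · rw [h]
      exact h3
    · rw [Finset.mem_singleton.1 h]
      exact h4

lemma hasCopy_iff {n r : ℕ} (hr : 1 ≤ r) (G : Finset (Finset (Fin n))) :
    HasCopy (M1r r) G ↔ ∃ e ∈ G, ∃ f ∈ G, e.card = r ∧ f.card = r ∧ Separated e f := by
  classical
  have hm : 0 < 2 * r := by omega
  rw [hasCopy_M1r]
  constructor
  · rintro ⟨g, hg, hcs, hG1, hG2⟩
    obtain ⟨u, hu⟩ := (cyclicSorted_iff_lifts hm g).1 hcs
    have hc1 : (univ.filter fun i : Fin (2 * r) => (i : ℕ) < r).card = r := by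
      rw [Fin.card_filter_val_lt]; omega
    have hc2 : (univ.filter fun i : Fin (2 * r) => r ≤ (i : ℕ)).card = r := by
      have := Finset.card_filter_add_card_filter_not (s := (univ : Finset (Fin (2 * r))))
        (fun i => (i : ℕ) < r)
      simp only [not_lt, hc1, Finset.card_univ, Fintype.card_fin] at this
      omega
    refine ⟨_, hG1, _, hG2, ?_, ?_, u 0, u (r - 1), ?_, ?_⟩
    · rw [Finset.card_image_of_injective _ hg, hc1]
    · rw [Finset.card_image_of_injective _ hg, hc2]
    · intro v hv
      simp only [Finset.mem_image, Finset.mem_filter, Finset.mem_univ, true_and] at hv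
      obtain ⟨i, hi, rfl⟩ := hv
      obtain ⟨k, hk⟩ := hu.2.2 i
      exact ⟨k, hk ▸ hu.1.monotone (by omega), hk ▸ hu.1.monotone (by omega)⟩
    · intro v hv
      simp only [Finset.mem_image, Finset.mem_filter, Finset.mem_univ, true_and] at hv
      obtain ⟨i, hi, rfl⟩ := hv
      obtain ⟨k, hk⟩ := hu.2.2 i
      rw [not_inArc]
      refine ⟨k, ?_, ?_⟩
      · rw [hk]
        exact hu.1 (by omega)
      · rw [hk, ← hu.2.1]
        have : u i < u (0 + (2 * r : ℕ)) := hu.1 (by have := i.2; omega)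
        omega
  · rintro ⟨e, he, f, hf, hec, hfc, a, x, h1, h2⟩
    -- `τ v` is the representative of `v` in `[a, a + n)`
    choose k hk1 hk2 using fun v : Fin n => exists_rep a v
    set τ : Fin n → ℤ := fun v => v + k v * n with hτ
    have hτi : Function.Injective τ := fun v v' h => residue_unique h
    have hτe : ∀ v ∈ e, τ v ≤ x := by
      intro v hv
      obtain ⟨j, hj1, hj2⟩ := h1 v hv
      have : k v < j + 1 := by
        by_contra! h
        have := hk2 v
        nlinarith [v.2]
      have : k v * (n : ℤ) ≤ j * n := mul_le_mul_of_nonneg_right (by omega) (by omega)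
      simp only [hτ]; omega
    have hτf : ∀ v ∈ f, x < τ v := by
      intro v hv
      by_contra! h
      exact h2 v hv ⟨k v, hk1 v, h⟩
    have hec' : (e.image τ).card = r := by rw [Finset.card_image_of_injective _ hτi, hec]
    have hfc' : (f.image τ).card = r := by rw [Finset.card_image_of_injective _ hτi, hfc]
    set oe := (e.image τ).orderEmbOfFin hec' with hoe
    set of := (f.image τ).orderEmbOfFin hfc' with hof
    have he' : ∀ i, ∃ v ∈ e, τ v = oe i := fun i =>
      Finset.mem_image.1 ((e.image τ).orderEmbOfFin_mem hec' i)
    have hf' : ∀ i, ∃ v ∈ f, τ v = of i := fun i =>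
      Finset.mem_image.1 ((f.image τ).orderEmbOfFin_mem hfc' i)
    have hes : ∀ v ∈ e, ∃ i, oe i = τ v := fun v hv => by
      have : τ v ∈ Set.range oe := by
        rw [hoe, Finset.range_orderEmbOfFin]
        exact_mod_cast Finset.mem_image_of_mem τ hv
      exact this
    have hfs : ∀ v ∈ f, ∃ i, of i = τ v := fun v hv => by
      have : τ v ∈ Set.range of := by
        rw [hof, Finset.range_orderEmbOfFin]
        exact_mod_cast Finset.mem_image_of_mem τ hv
      exact this
    -- first run through `e` along `[a, x]`, then through `f` along `[x + 1, a + n - 1]`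
    set h : ℕ → ℤ := fun i => if hi : i < r then oe ⟨i, hi⟩ else
      if hi' : i - r < r then of ⟨i - r, hi'⟩ else 0 with hh
    have hhe : ∀ i (hi : i < r), h i = oe ⟨i, hi⟩ := fun i hi => by simp [hh, hi]
    have hhf : ∀ i (hi : i < r), h (i + r) = of ⟨i, hi⟩ := fun i hi => by simp [hh, hi]
    have hcase : ∀ i, i < 2 * r → i < r ∨ ∃ j, j < r ∧ i = j + r := fun i hi => by
      rcases lt_or_ge i r with h | h
      · exact Or.inl h
      · exact Or.inr ⟨i - r, by omega, by omega⟩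
    have hrep : ∀ i, i < 2 * r → ∃ v, τ v = h i := by
      intro i hi
      obtain hi | ⟨j, hj, rfl⟩ := hcase i hi
      · rw [hhe i hi]
        obtain ⟨v, -, hv⟩ := he' ⟨i, hi⟩
        exact ⟨v, hv⟩
      · rw [hhf j hj]
        obtain ⟨v, -, hv⟩ := hf' ⟨j, hj⟩
        exact ⟨v, hv⟩
    have hlt : ∀ i j, i < j → j < 2 * r → h i < h j := by
      intro i j hij hj
      obtain hi | ⟨i, hi, rfl⟩ := hcase i (by omega) <;> obtain hj' | ⟨j, hj', rfl⟩ := hcase j hj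
      · rw [hhe i hi, hhe j hj']
        exact oe.strictMono hij
      · rw [hhe i hi, hhf j hj']
        obtain ⟨v, hv, hv'⟩ := he' ⟨i, hi⟩
        obtain ⟨v₂, hv₂, hv₂'⟩ := hf' ⟨j, hj'⟩
        rw [← hv', ← hv₂']
        exact (hτe v hv).trans_lt (hτf v₂ hv₂)
      · omega
      · rw [hhf i hi, hhf j hj']
        exact of.strictMono (by rw [Fin.mk_lt_mk]; omega)
    obtain ⟨u, hu1, hu2, hu3⟩ := exists_periodic_extension hm (n := n) h hlt (by
      obtain ⟨v, hv⟩ := hrep (2 * r - 1) (by omega)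
      obtain ⟨v', hv'⟩ := hrep 0 hm
      rw [← hv, ← hv']
      have := hk2 v
      have := hk1 v'
      simp only [hτ]; omega)
    choose g hg using fun i : Fin (2 * r) => hrep i i.2
    have hl : Lifts u g := ⟨hu1, hu2, fun i => ⟨k (g i), by rw [hu3 i i.2]; exact hg i⟩⟩
    refine ⟨g, hl.injective, (cyclicSorted_iff_lifts hm g).2 ⟨u, hl⟩, ?_, ?_⟩
    · convert he
      ext v
      simp only [Finset.mem_image, Finset.mem_filter, Finset.mem_univ, true_and]
      constructor
      · rintro ⟨i, hi, rfl⟩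
        obtain ⟨v, hv, hv'⟩ := he' ⟨i, hi⟩
        rwa [hτi ((hg i).trans ((hhe i hi).trans hv'.symm))]
      · intro hv
        obtain ⟨i, hi⟩ := hes v hv
        refine ⟨⟨i, by omega⟩, i.2, hτi ?_⟩
        rw [hg, ← hi, hhe i i.2]
    · convert hf
      ext v
      simp only [Finset.mem_image, Finset.mem_filter, Finset.mem_univ, true_and]
      constructor
      · rintro ⟨i, hi, rfl⟩
        obtain hi' | ⟨j, hj, hij⟩ := hcase i i.2
        · omega
        obtain ⟨v, hv, hv'⟩ := hf' ⟨j, hj⟩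
        rwa [hτi ((hg i).trans ((hij ▸ hhf j hj).trans hv'.symm))]
      · intro hv
        obtain ⟨i, hi⟩ := hfs v hv
        refine ⟨⟨i + r, by omega⟩, by simp, hτi ?_⟩
        rw [hg, ← hi, hhf i i.2]

lemma isSat_iff {n r : ℕ} (hr : 1 ≤ r) (H : Finset (Finset (Fin n))) :
    IsSat (M1r r) r H ↔ (∀ h ∈ H, h.card = r) ∧ (∀ e ∈ H, ∀ f ∈ H, ¬ Separated e f) ∧
      ∀ e : Finset (Fin n), e.card = r → e ∉ H → ∃ f ∈ H, Separated e f := by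
  classical
  unfold IsSat
  refine and_congr_right fun hH => ?_
  have hfree : ¬ HasCopy (M1r r) H ↔ ∀ e ∈ H, ∀ f ∈ H, ¬ Separated e f := by
    rw [hasCopy_iff hr]
    constructor
    · intro h e he f hf hs
      exact h ⟨e, he, f, hf, hH e he, hH f hf, hs⟩
    · rintro h ⟨e, he, f, hf, -, -, hs⟩
      exact h e he f hf hs
  rw [hfree]
  refine and_congr_right fun hfr => forall_congr' fun e => forall_congr' fun he =>
    forall_congr' fun heH => ?_
  rw [hasCopy_iff hr]
  have hne : ¬ Separated e e := not_separated_self (Finset.card_pos.1 (by omega))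
  constructor
  · rintro ⟨e₁, he₁, e₂, he₂, -, -, hs⟩
    rw [Finset.mem_insert] at he₁ he₂
    rcases he₁ with rfl | he₁ <;> rcases he₂ with rfl | he₂
    · exact absurd hs hne
    · exact ⟨e₂, he₂, hs⟩
    · exact ⟨e₁, he₁, hs.symm⟩
    · exact absurd hs (hfr _ he₁ _ he₂)
  · rintro ⟨f, hf, hs⟩
    exact ⟨e, Finset.mem_insert_self _ _, f, Finset.mem_insert_of_mem hf, he, hH f hf, hs⟩

/-! ### Semi-valid tuples -/

/-- The points of a tuple `w`, read in the cyclic order `w_1 < w_3 < ⋯ < w_2 < w_4 < ⋯`. -/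
def reorder {n : ℕ} (ℓ : ℕ) (w : Fin (2 * ℓ + 1) → Fin n) (p : Fin (2 * ℓ + 1)) : Fin n :=
  w ⟨(2 * (p : ℕ)) % (2 * ℓ + 1), Nat.mod_lt _ (by omega)⟩

/-- If `i = 2p` modulo `2ℓ + 1`, then the arc `[w_i, w_{i-1}]` reaches `ℓ` steps ahead in the
cyclic order of the points of `w`. -/
lemma arc_of_lifts {n ℓ : ℕ} {w : Fin (2 * ℓ + 1) → Fin n} {u : ℤ → ℤ}
    (hu : Lifts u (reorder ℓ w)) {i : Fin (2 * ℓ + 1)} {p c : ℤ}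
    (hip : 2 * p = i + c * (2 * ℓ + 1)) (v : Fin n) :
    v ∈ arcCC (w i) (w (i - 1)) ↔ InArc (u p) (u (p + ℓ)) v := by
  have hN : (0 : ℤ) < 2 * ℓ + 1 := by omega
  have core : ∀ (i : Fin (2 * ℓ + 1)) (p c : ℤ), 2 * p = i + c * (2 * ℓ + 1) →
      ∃ k : ℤ, w i + k * n = u p := by
    intro i p c hip
    have e0 := Int.mul_ediv_add_emod p (2 * ℓ + 1)
    have e1 := Int.emod_nonneg p hN.ne'
    have e2 := Int.emod_lt_of_pos p hN
    obtain ⟨j, hj⟩ : ∃ j : ℕ, p % (2 * ℓ + 1) = j := ⟨_, (Int.toNat_of_nonneg e1).symm⟩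
    obtain ⟨k, hk⟩ := hu.rep ⟨j, by omega⟩ (q := p) (c := p / (2 * ℓ + 1)) (by
      push_cast
      rw [← hj]
      linarith)
    refine ⟨k, ?_⟩
    rw [← hk, reorder]
    congr 4
    ext
    have e3 : ((2 * j : ℕ) : ℤ) % (2 * ℓ + 1 : ℕ) = (i : ℤ) := by
      have : ((2 * j : ℕ) : ℤ) =
          i + (c - 2 * (p / (2 * ℓ + 1))) * ((2 * ℓ + 1 : ℕ) : ℤ) := by
        push_cast
        rw [← hj]
        linarith
      rw [this, Int.add_mul_emod_self_right]
      exact Int.emod_eq_of_lt (by omega) (by have := i.2; omega)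
    dsimp only
    exact_mod_cast e3.symm
  obtain ⟨k, hk⟩ := core i p c hip
  obtain ⟨c', hc'⟩ : ∃ c' : ℤ, 2 * (p + ℓ) = (i - 1 : Fin (2 * ℓ + 1)) + c' * (2 * ℓ + 1) := by
    rw [Fin.coe_sub_one]
    split_ifs with h
    · refine ⟨c, ?_⟩
      subst h
      simp only [Fin.val_zero] at hip
      push_cast at hip ⊢
      linarith
    · have : (i : ℕ) ≠ 0 := fun h' => h (Fin.ext h')
      refine ⟨c + 1, ?_⟩
      rw [Nat.cast_sub (by omega)]
      push_cast
      linarith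
  obtain ⟨k', hk'⟩ := core (i - 1) (p + ℓ) c' hc'
  refine arcCC_mem_iff hk hk' (hu.1.monotone (by omega)) ?_
  rw [← hu.2.1]
  exact hu.1 (by omega)

lemma exists_index {ℓ : ℕ} (p : ℤ) :
    ∃ i : Fin (2 * ℓ + 1), ∃ c : ℤ, 2 * p = i + c * (2 * ℓ + 1) := by
  obtain ⟨i, c, h⟩ := exists_residue (n := 2 * ℓ + 1) (by omega) (2 * p)
  exact ⟨i, c, by push_cast at h; exact h.symm⟩

lemma exists_position {ℓ : ℕ} (i : Fin (2 * ℓ + 1)) :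
    ∃ p c : ℤ, 2 * p = i + c * (2 * ℓ + 1) :=
  ⟨i * (ℓ + 1), i, by ring⟩

lemma semiValid_iff_lifts {n ℓ : ℕ} (w : Fin (2 * ℓ + 1) → Fin n) :
    SemiValid ℓ w ↔ ∃ u, Lifts u (reorder ℓ w) := by
  unfold SemiValid
  change _ ∧ CyclicSorted (List.ofFn (reorder ℓ w)) ↔ _
  rw [cyclicSorted_iff_lifts (by omega)]
  refine and_iff_right_of_imp ?_
  rintro ⟨u, hu⟩
  have hs : ∀ i : Fin (2 * ℓ + 1), ∃ p, reorder ℓ w p = w i ∧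
      2 * (p : ℕ) % (2 * ℓ + 1) = i := by
    intro i
    have h : 2 * (i * (ℓ + 1) % (2 * ℓ + 1)) % (2 * ℓ + 1) = (i : ℕ) := by
      rw [Nat.mul_mod_mod, show 2 * ((i : ℕ) * (ℓ + 1)) = i + i * (2 * ℓ + 1) by ring,
        Nat.add_mul_mod_self_right, Nat.mod_eq_of_lt i.2]
    refine ⟨⟨i * (ℓ + 1) % (2 * ℓ + 1), Nat.mod_lt _ (by omega)⟩, ?_, h⟩
    unfold reorder
    congr 1
    ext
    exact h
  intro i j hij
  obtain ⟨p, hp, hp'⟩ := hs i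
  obtain ⟨q, hq, hq'⟩ := hs j
  have := hu.injective (hp.trans (hij.trans hq.symm))
  subst this
  ext
  omega

lemma exists_tuple {n ℓ : ℕ} (hn : 0 < n) {u : ℤ → ℤ} (hu : StrictMono u)
    (hup : ∀ q, u (q + (2 * ℓ + 1 : ℕ)) = u q + n) :
    ∃ w : Fin (2 * ℓ + 1) → Fin n, Lifts u (reorder ℓ w) := by
  -- `ℓ + 1` is the inverse of `2` modulo `2ℓ + 1`, so `w_i` sits at position `i (ℓ + 1)`
  choose g k hg using fun i : Fin (2 * ℓ + 1) => exists_residue hn (u (i * (ℓ + 1)))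
  refine ⟨g, hu, hup, fun p => ?_⟩
  refine ⟨k ⟨(2 * (p : ℕ)) % (2 * ℓ + 1), Nat.mod_lt _ (by omega)⟩ +
    ((2 * (p : ℕ)) / (2 * ℓ + 1) : ℕ) * (ℓ + 1) - p, ?_⟩
  rw [reorder, sub_mul, add_mul, add_sub_assoc, ← add_assoc, hg, ← add_sub_assoc,
    ← periodic_zsmul hup, sub_eq_iff_eq_add, ← periodic_zsmul hup]
  congr 1
  have h : ((2 * p : ℕ) : ℤ) = _ :=
    congrArg Nat.cast (Nat.div_add_mod (2 * (p : ℕ)) (2 * ℓ + 1)).symm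
  rw [Nat.cast_add, Nat.cast_mul _ (2 * (p : ℕ) / _)] at h
  push_cast at h ⊢
  linear_combination (-(ℓ + 1 : ℤ)) * h

lemma mem_HnC_iff {n r ℓ : ℕ} {w : Fin (2 * ℓ + 1) → Fin n} {u : ℤ → ℤ}
    (hu : Lifts u (reorder ℓ w)) (e : Finset (Fin n)) :
    e ∈ HnC r ℓ w ↔ e.card = r ∧ ∀ p : ℤ, ∃ v ∈ e, InArc (u p) (u (p + ℓ)) v := by
  simp only [HnC, Finset.mem_filter, Finset.mem_powersetCard, Finset.subset_univ, true_and,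
    Finset.Nonempty, Finset.mem_inter]
  refine and_congr_right fun _ => ⟨fun h p => ?_, fun h i => ?_⟩
  · obtain ⟨i, c, hi⟩ := exists_index (ℓ := ℓ) p
    obtain ⟨v, hv, hv'⟩ := h i
    exact ⟨v, hv, (arc_of_lifts hu hi v).1 hv'⟩
  · obtain ⟨p, c, hi⟩ := exists_position i
    obtain ⟨v, hv, hv'⟩ := h p
    exact ⟨v, hv, (arc_of_lifts hu hi v).2 hv'⟩

lemma exists_subset_with_ends {α : Type*} [DecidableEq α] {S : Finset α} {a b : α} {r : ℕ}
    (hr : 2 ≤ r) (hS : r ≤ S.card) (ha : a ∈ S) (hb : b ∈ S) :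
    ∃ e ⊆ S, e.card = r ∧ a ∈ e ∧ b ∈ e := by
  have h1 : ({a, b} : Finset α) ⊆ S := by
    intro x hx
    simp only [Finset.mem_insert, Finset.mem_singleton] at hx
    rcases hx with rfl | rfl <;> assumption
  obtain ⟨e, h2, h3, h4⟩ := Finset.exists_subsuperset_card_eq h1 (Finset.card_le_two.trans hr) hS
  exact ⟨e, h3, h4, h2 (by simp), h2 (by simp)⟩

/-! ### Both implications -/

/-- Of two complementary arcs, one contains some `[u p, u (p + ℓ)]` and so the other contains no
member of `H(C)`; hence `H(C)` is `M_1`-free. An `r`-set missing the arc `[u p, u (p + ℓ)]` is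
separated from an `r`-subset of that arc containing both ends, and such a subset meets every arc
`[u q, u (q + ℓ)]`. -/
lemma isSat_of_rValid {n r ℓ : ℕ} (hr : 2 ≤ r) {w : Fin (2 * ℓ + 1) → Fin n}
    (hw : RValid r ℓ w) : IsSat (M1r r) r (HnC r ℓ w) := by
  classical
  obtain ⟨hsv, hcard⟩ := hw
  obtain ⟨u, hu⟩ := (semiValid_iff_lifts w).1 hsv
  have hn : 0 < n := (Nat.zero_le _).trans_lt (w 0).2
  have hup := hu.2.1
  have hupz := periodic_zsmul hup
  rw [isSat_iff (by omega)]
  simp only [mem_HnC_iff hu]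
  refine ⟨fun h hh => hh.1, ?_, ?_⟩
  · rintro e ⟨-, he⟩ f ⟨-, hf⟩ ⟨a, x, h1, h2⟩
    obtain ⟨p, hp1, hp2⟩ := exists_first_ge hu.1 (n := n) (by omega) hup a
    rcases le_or_gt (u (p + ℓ)) x with h | h
    · obtain ⟨v, hv, hv'⟩ := hf p
      exact h2 v hv (hv'.mono hp1 h)
    · obtain ⟨v, hv, hv'⟩ := he (p + ℓ)
      refine not_inArc.2 (hv'.mono (by omega) ?_) (h1 v hv)
      have h3 := hup (p - 1)
      rw [show p - 1 + ((2 * ℓ + 1 : ℕ) : ℤ) = p + ℓ + ℓ by push_cast; ring] at h3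
      omega
  · intro e he hne
    have : ∃ p : ℤ, ∀ v ∈ e, ¬ InArc (u p) (u (p + ℓ)) v := by
      by_contra! h
      exact hne ⟨he, h⟩
    obtain ⟨p, hp⟩ := this
    obtain ⟨i, c, hi⟩ := exists_index (ℓ := ℓ) p
    have harc := arc_of_lifts hu hi
    obtain ⟨a, ka, ha⟩ := exists_residue hn (u p)
    obtain ⟨b, kb, hb⟩ := exists_residue hn (u (p + ℓ))
    have hle : u p ≤ u (p + ℓ) := hu.1.monotone (by omega)
    obtain ⟨f, hfs, hfc, haf, hbf⟩ := exists_subset_with_ends hr (hcard i)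
      ((harc a).2 ⟨ka, by omega, by omega⟩) ((harc b).2 ⟨kb, by omega, by omega⟩)
    refine ⟨f, ⟨hfc, fun q => ?_⟩, Separated.symm ⟨u p, u (p + ℓ),
      fun v hv => (harc v).1 (hfs hv), hp⟩⟩
    have hN : (0 : ℤ) < (2 * ℓ + 1 : ℕ) := by omega
    have e0 := Int.mul_ediv_add_emod (q - p) (2 * ℓ + 1 : ℕ)
    have e1 := Int.emod_nonneg (q - p) hN.ne'
    have e2 := Int.emod_lt_of_pos (q - p) hN
    -- up to whole turns `q = p + s` with `0 ≤ s ≤ 2ℓ`; the arc from `u q` contains the right end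
    -- `u (p + ℓ)` if `s ≤ ℓ`, and the left end `u p` of the next turn otherwise
    set s := (q - p) % (2 * ℓ + 1 : ℕ) with hs
    set d := (q - p) / (2 * ℓ + 1 : ℕ) with hd
    have hq1 : u q = u (p + s) + d * n := by rw [← hupz]; congr 1; linarith
    have hq2 : u (q + ℓ) = u (p + s + ℓ) + d * n := by rw [← hupz]; congr 1; linarith
    simp only [hq1, hq2, inArc_shift]
    rcases le_or_gt s ℓ with h | h
    · refine ⟨b, hbf, kb, ?_, ?_⟩ <;> rw [hb] <;> exact hu.1.monotone (by omega)
    · refine ⟨a, haf, ka + 1, ?_, ?_⟩ <;> rw [add_mul, one_mul, ← add_assoc, ha, ← hup] <;>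
        exact hu.1.monotone (by omega)

/-- For a saturated `H`, at least one of two complementary nonempty arcs contains an edge. One of
them, `A` say, has at least `r` points, as `n ≥ 2r`. Choose an `r`-set in `A` containing both ends
of `A` (this needs `r ≥ 2`): if it is not an edge, an arc avoiding it contains an edge, and such
an arc lies inside `A` or inside its complement. -/
lemma arc_dichotomy {n r : ℕ} (hr : 2 ≤ r) (hn : 2 * r ≤ n) {H : Finset (Finset (Fin n))}
    (hsat : ∀ e : Finset (Fin n), e.card = r → e ∉ H → ∃ f ∈ H, Separated e f)
    {a x : ℤ} (hax : a ≤ x) (hxa : x + 1 < a + n) :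
    (∃ h ∈ H, ∀ v ∈ h, InArc a x v) ∨ ∃ h ∈ H, ∀ v ∈ h, InArc (x + 1) (a + n - 1) v := by
  classical
  have main : ∀ a x : ℤ, a ≤ x → x + 1 < a + n →
      r ≤ (univ.filter fun v : Fin n => InArc a x v).card →
      (∃ h ∈ H, ∀ v ∈ h, InArc a x v) ∨ ∃ h ∈ H, ∀ v ∈ h, InArc (x + 1) (a + n - 1) v := by
    intro a x hax hxa hc
    by_contra! hcon
    obtain ⟨hL, hR⟩ := hcon
    obtain ⟨s, ks, hs⟩ := exists_residue (n := n) (by omega) a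
    obtain ⟨t, kt, ht⟩ := exists_residue (n := n) (by omega) x
    obtain ⟨e, hes, hec, hse, hte⟩ := exists_subset_with_ends hr hc (a := s) (b := t)
      (by simp only [Finset.mem_filter, Finset.mem_univ, true_and]
          exact ⟨ks, by omega, by omega⟩)
      (by simp only [Finset.mem_filter, Finset.mem_univ, true_and]
          exact ⟨kt, by omega, by omega⟩)
    have heA : ∀ v ∈ e, InArc a x v := fun v hv => by simpa using hes hv
    obtain ⟨f, hf, hsep⟩ := hsat e hec fun heH => by
      obtain ⟨v, hv, hv'⟩ := hL e heH
      exact hv' (heA v hv)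
    obtain ⟨b, y, hb1, hb2⟩ := hsep.symm
    obtain ⟨z, j, hz⟩ := exists_residue (n := n) (by omega) b
    -- translate the separating arc so that it starts in `[a, a + n)`
    obtain ⟨k, hk1, hk2⟩ := exists_rep a z
    obtain ⟨b', y', hb', hb1, hb2⟩ : ∃ b' y' : ℤ, (a ≤ b' ∧ b' < a + n) ∧
        (∀ v ∈ f, InArc b' y' v) ∧ ∀ v ∈ e, ¬ InArc b' y' v := by
      refine ⟨b + (k - j) * n, y + (k - j) * n, ⟨?_, ?_⟩, ?_, ?_⟩
      · rw [← hz]; linarith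
      · rw [← hz]; linarith
      · simpa only [inArc_shift] using hb1
      · simpa only [inArc_shift] using hb2
    have hy : y' < a + n := by
      by_contra! h
      refine hb2 s hse ⟨ks + 1, ?_, ?_⟩ <;> linarith
    rcases lt_or_ge x b' with h | h
    · obtain ⟨v, hv, hv'⟩ := hR f hf
      exact hv' ((hb1 v hv).mono (by omega) (by omega))
    · have : y' < x := by
        by_contra! h'
        exact hb2 t hte ⟨kt, by omega, by omega⟩
      obtain ⟨v, hv, hv'⟩ := hL f hf
      exact hv' ((hb1 v hv).mono (by omega) (by omega))
  have hsum := Finset.card_filter_add_card_filter_not (s := (univ : Finset (Fin n)))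
    (fun v => InArc a x v)
  simp only [not_inArc, Finset.card_univ, Fintype.card_fin] at hsum
  rcases le_or_gt r (univ.filter fun v : Fin n => InArc a x v).card with h | h
  · exact main a x hax hxa h
  · have := main (x + 1) (a + n - 1) (by omega) (by omega) (by omega)
    rw [or_comm, show a + n - 1 + 1 = a + 1 * (n : ℤ) by ring,
      show x + 1 + n - 1 = x + 1 * (n : ℤ) by ring] at this
    simpa only [inArc_shift] using this

lemma exists_rValid_of_isSat {n r : ℕ} (hr : 2 ≤ r) (hn : 2 * r ≤ n)
    {H : Finset (Finset (Fin n))} (hH : IsSat (M1r r) r H) :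
    ∃ ℓ : ℕ, 1 ≤ ℓ ∧ ∃ w : Fin (2 * ℓ + 1) → Fin n, RValid r ℓ w ∧ H = HnC r ℓ w := by
  classical
  rw [isSat_iff (by omega)] at hH
  obtain ⟨hcard, hfree, hsat⟩ := hH
  obtain ⟨h₀, hh₀⟩ : H.Nonempty := by
    by_contra! h
    obtain ⟨e, -, he⟩ := Finset.exists_subset_card_eq (s := (univ : Finset (Fin n))) (n := r)
      (by simp; omega)
    obtain ⟨f, hf, -⟩ := hsat e he (by simp [h])
    simp [h] at hf
  -- the arcs containing an edge
  set L : ℤ → ℤ → Prop := fun a x => ∃ h ∈ H, ∀ v ∈ h, InArc a x v with hL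
  have hLmono : ∀ {a x a' x'}, L a x → a' ≤ a → x ≤ x' → L a' x' := by
    rintro a x a' x' ⟨h, hh, hv⟩ h1 h2
    exact ⟨h, hh, fun v hvh => (hv v hvh).mono h1 h2⟩
  have hLfull : ∀ a, L a (a + n - 1) := fun a => ⟨h₀, hh₀, fun v _ => by
    obtain ⟨k, hk1, hk2⟩ := exists_rep a v
    exact ⟨k, hk1, by omega⟩⟩
  have hLgt : ∀ a x, L a x → a < x := by
    rintro a x ⟨h, hh, hv⟩
    obtain ⟨v, hvh, v', hv'h, hne⟩ := Finset.one_lt_card.1 (by rw [hcard h hh]; omega)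
    by_contra! hle
    obtain ⟨k, h1, h2⟩ := hv v hvh
    obtain ⟨k', h1', h2'⟩ := hv v' hv'h
    exact hne (residue_unique (k := k) (k' := k') (by omega))
  -- `ρ a` is the end of the shortest arc starting at `a` that contains an edge
  have hex : ∀ a, ∃ y, ∀ x, L a x ↔ y ≤ x := by
    intro a
    obtain ⟨y, h1, h2⟩ := Int.exists_least_of_bdd (P := L a) ⟨a, fun z hz => (hLgt a z hz).le⟩
      ⟨_, hLfull a⟩
    exact ⟨y, fun x => ⟨h2 x, fun h => hLmono h1 le_rfl h⟩⟩
  choose ρ hρ using hex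
  have hgt : ∀ v, v < ρ v := fun v => hLgt _ _ ((hρ v _).2 le_rfl)
  have hlt : ∀ v, ρ v ≤ v + n - 1 := fun v => (hρ v _).1 (hLfull v)
  have hmono : Monotone ρ := fun a b hab => (hρ a _).1 (hLmono ((hρ b _).2 le_rfl) hab le_rfl)
  have hLshift : ∀ a x, L (a + n) (x + n) ↔ L a x := by
    intro a x
    have := fun v : Fin n => inArc_shift (A := a) (B := x) 1 (v := v)
    simp only [one_mul] at this
    simp only [hL, this]
  have hper : ∀ v, ρ (v + n) = ρ v + n := by
    intro v
    apply le_antisymm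
    · rw [← hρ, hLshift, hρ]
    · -- translate the shortest arc at `v + n` back by one turn
      have := (hLshift v (ρ (v + n) - n)).1 (by rw [sub_add_cancel, hρ])
      rw [hρ] at this
      omega
  have hexcl : ∀ v x, L v x → ¬ L (x + 1) (v + n - 1) := by
    rintro v x ⟨e, he, hev⟩ ⟨f, hf, hfv⟩
    exact hfree e he f hf ⟨v, x, hev, fun u hu => not_inArc.2 (hfv u hu)⟩
  have hdual : ∀ v x, ρ v ≤ x ↔ v + n ≤ ρ (x + 1) := by
    intro v x
    constructor
    · intro h
      have := hexcl v x ((hρ v x).2 h)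
      rw [hρ] at this
      omega
    · intro h
      by_contra! hx
      have h1 := hlt (x + 1)
      have h2 := hlt v
      have h3 : v + n - 1 < ρ (x + 1) := by omega
      obtain hvx | rfl : v ≤ x ∨ v = x + 1 := by omega
      · rcases arc_dichotomy hr hn hsat hvx (by omega) with h4 | h4
        · have := (hρ v x).1 h4
          omega
        · have := (hρ _ _).1 h4
          omega
      · omega
  obtain ⟨ℓ, hℓ, u, hu, hup, hρu, hlast⟩ := selfDual_structure (by omega) hper hdual hgt hmono
  obtain ⟨w, hw⟩ := exists_tuple (by omega) hu hup
  have hLu : ∀ p, L (u p) (u (p + ℓ)) := fun p => by rw [hρ, hρu]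
  refine ⟨ℓ, hℓ, w, ⟨(semiValid_iff_lifts w).2 ⟨u, hw⟩, fun i => ?_⟩, ?_⟩
  · obtain ⟨p, c, hi⟩ := exists_position i
    obtain ⟨h, hh, hv⟩ := hLu p
    rw [← hcard h hh]
    exact Finset.card_le_card fun v hvh => (arc_of_lifts hw hi v).2 (hv v hvh)
  · ext e
    rw [mem_HnC_iff hw]
    constructor
    · intro he
      refine ⟨hcard e he, fun p => ?_⟩
      by_contra! h
      obtain ⟨f, hf, hfv⟩ := hLu p
      exact hfree f hf e he ⟨_, _, hfv, h⟩
    · rintro ⟨hec, he⟩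
      by_contra heH
      obtain ⟨f, hf, hsep⟩ := hsat e hec heH
      obtain ⟨a, x, h1, h2⟩ := hsep.symm
      obtain ⟨p, hp1, hp2⟩ := hlast a
      have h3 := (hρ a x).1 ⟨f, hf, h1⟩
      obtain ⟨v, hv, hv'⟩ := he p
      exact h2 v hv (hv'.mono hp1 (by omega))

-- STATEMENT 13
theorem sat_structure (n r : ℕ) (hr : 2 ≤ r) (hn : 2 * r ≤ n)
    (H : Finset (Finset (Fin n))) :
    IsSat (M1r r) r H ↔
      ∃ ℓ : ℕ, 1 ≤ ℓ ∧ ∃ w : Fin (2 * ℓ + 1) → Fin n, RValid r ℓ w ∧ H = HnC r ℓ w := by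
  constructor
  · exact exists_rValid_of_isSat hr hn
  · rintro ⟨ℓ, -, w, hw, rfl⟩
    exact isSat_of_rValid hr hw
end
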